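/- arXiv:1312.5501 — 3 statements merged into one kernel-verified Lean document; each statement's English description precedes it below -/
import Mathlib

section
/- (The Main Lemma.) Let P be a modular operad in sets and f: Ass → P a morphism of cyclic operads. Let A, B, C be tuples of distinct elements and x, y two further distinct elements (all labels pairwise distinct). Then ξ_{xy} f⟨A B x C y⟩ = ξ_{xy} f⟨B A x C y⟩. Informally: if an arc joining x to y cuts the circle into two semicircles, the labels on each semicircle can be cyclically permuted without changing the contracted element. -/
/-- A modular operad in the category of sets, presented with labels drawn
from `ℕ`: an element `x` has a finite set `legs x` of labels and a genus
`gen x`.  Bijections act via functions `ℕ → ℕ` that are injective on the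
legs, `comp a b` is the operadic composition `∘_{a,b}` and `xi a b` is
the contraction `ξ_{ab}`. -/
structure ModularOperad where
  El : Type
  legs : El → Finset ℕ
  gen : El → ℕ
  act : (ℕ → ℕ) → El → El
  comp : ℕ → ℕ → El → El → El
  xi : ℕ → ℕ → El → El
  -- book-keeping of legs and genus
  legs_act : ∀ (ρ : ℕ → ℕ) (x : El), Set.InjOn ρ (legs x : Set ℕ) →
    legs (act ρ x) = (legs x).image ρ
  gen_act : ∀ (ρ : ℕ → ℕ) (x : El), Set.InjOn ρ (legs x : Set ℕ) →
    gen (act ρ x) = gen x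
  legs_comp : ∀ (a b : ℕ) (x y : El), a ∈ legs x → b ∈ legs y →
    Disjoint (legs x) (legs y) →
    legs (comp a b x y) = (legs x).erase a ∪ (legs y).erase b
  gen_comp : ∀ (a b : ℕ) (x y : El), a ∈ legs x → b ∈ legs y →
    Disjoint (legs x) (legs y) →
    gen (comp a b x y) = gen x + gen y
  legs_xi : ∀ (a b : ℕ) (x : El), a ∈ legs x → b ∈ legs x → a ≠ b →
    legs (xi a b x) = ((legs x).erase a).erase b
  gen_xi : ∀ (a b : ℕ) (x : El), a ∈ legs x → b ∈ legs x → a ≠ b →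
    gen (xi a b x) = gen x + 1
  -- `ξ_{ab} = ξ_{ba}`
  xi_symm : ∀ (a b : ℕ) (x : El), xi a b x = xi b a x
  -- functoriality of the action (axiom 2)
  act_id : ∀ x : El, act id x = x
  act_congr : ∀ (ρ ρ' : ℕ → ℕ) (x : El), (∀ c ∈ legs x, ρ c = ρ' c) →
    act ρ x = act ρ' x
  act_act : ∀ (ρ σ : ℕ → ℕ) (x : El), Set.InjOn σ (legs x : Set ℕ) →
    Set.InjOn ρ (((legs x).image σ : Finset ℕ) : Set ℕ) →
    act (ρ ∘ σ) x = act ρ (act σ x)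
  -- axiom 1: symmetry of `∘`
  comp_symm : ∀ (a b : ℕ) (x y : El), a ∈ legs x → b ∈ legs y →
    Disjoint (legs x) (legs y) → comp a b x y = comp b a y x
  -- axiom 3: equivariance of `∘`
  act_comp : ∀ (ρ : ℕ → ℕ) (a b : ℕ) (x y : El), a ∈ legs x → b ∈ legs y →
    Disjoint (legs x) (legs y) →
    Set.InjOn ρ ((legs x ∪ legs y : Finset ℕ) : Set ℕ) →
    act ρ (comp a b x y) = comp (ρ a) (ρ b) (act ρ x) (act ρ y)
  -- axiom 4: equivariance of `ξ`
  act_xi : ∀ (ρ : ℕ → ℕ) (a b : ℕ) (x : El), a ∈ legs x → b ∈ legs x →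
    a ≠ b → Set.InjOn ρ (legs x : Set ℕ) →
    act ρ (xi a b x) = xi (ρ a) (ρ b) (act ρ x)
  -- axiom 5
  xi_xi : ∀ (a b c d : ℕ) (x : El), a ∈ legs x → b ∈ legs x → c ∈ legs x →
    d ∈ legs x → a ≠ b → c ≠ d → a ≠ c → a ≠ d → b ≠ c → b ≠ d →
    xi a b (xi c d x) = xi c d (xi a b x)
  -- axiom 6: `ξ_{ab}(x ∘_{c,d} y) = ξ_{cd}(x ∘_{a,b} y)`,
  -- `a, c` legs of `x` and `b, d` legs of `y`
  xi_comp_exchange : ∀ (a b c d : ℕ) (x y : El), a ∈ legs x → c ∈ legs x →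
    b ∈ legs y → d ∈ legs y → a ≠ c → b ≠ d → Disjoint (legs x) (legs y) →
    xi a b (comp c d x y) = xi c d (comp a b x y)
  -- axiom 7: `ξ_{cd}(x) ∘_{a,b} y = ξ_{cd}(x ∘_{a,b} y)`, `c, d` legs of `x`
  xi_comp_left : ∀ (a b c d : ℕ) (x y : El), a ∈ legs x → b ∈ legs y →
    c ∈ legs x → d ∈ legs x → c ≠ d → a ≠ c → a ≠ d →
    Disjoint (legs x) (legs y) →
    comp a b (xi c d x) y = xi c d (comp a b x y)
  -- axiom 8: associativity of `∘`
  comp_assoc : ∀ (a b c d : ℕ) (x y z : El), a ∈ legs x → b ∈ legs y →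
    c ∈ legs y → d ∈ legs z → b ≠ c →
    Disjoint (legs x) (legs y) → Disjoint (legs x) (legs z) →
    Disjoint (legs y) (legs z) →
    comp c d (comp a b x y) z = comp a b x (comp c d y z)

/-- A morphism of cyclic operads `f : Ass → P` into (the underlying cyclic
operad of) a modular operad `P`.  An element of `Ass(C)` is a cyclic order
on the nonempty finite set `C`, represented by a nonempty duplicate-free
list of labels, two lists representing the same element iff they are
rotations of each other (`f_rot`).  `f` lands in the genus `0` part of `P`,
commutes with the actions of bijections (`f_act`) and with the cyclic
operad composition `⟨X a⟩ ∘_{a,b} ⟨b Y⟩ = ⟨X Y⟩` (`f_comp`). -/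
structure AssMorphism (P : ModularOperad) where
  f : List ℕ → P.El
  legs_f : ∀ l : List ℕ, l ≠ [] → l.Nodup → P.legs (f l) = l.toFinset
  gen_f : ∀ l : List ℕ, l ≠ [] → l.Nodup → P.gen (f l) = 0
  f_rot : ∀ l l' : List ℕ, l ≠ [] → l.Nodup → l ~r l' → f l = f l'
  f_act : ∀ (ρ : ℕ → ℕ) (l : List ℕ), l ≠ [] → l.Nodup →
    Set.InjOn ρ (l.toFinset : Set ℕ) → f (l.map ρ) = P.act ρ (f l)
  f_comp : ∀ (X Y : List ℕ) (a b : ℕ), (X ++ a :: b :: Y).Nodup →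
    X ++ Y ≠ [] →
    P.comp a b (f (X ++ [a])) (f (b :: Y)) = f (X ++ Y)

/-- A morphism of modular operads. -/
structure ModularHom (Q P : ModularOperad) where
  toFun : Q.El → P.El
  legs_map : ∀ x, P.legs (toFun x) = Q.legs x
  gen_map : ∀ x, P.gen (toFun x) = Q.gen x
  map_act : ∀ (ρ : ℕ → ℕ) (x : Q.El), Set.InjOn ρ (Q.legs x : Set ℕ) →
    toFun (Q.act ρ x) = P.act ρ (toFun x)
  map_comp : ∀ (a b : ℕ) (x y : Q.El), a ∈ Q.legs x → b ∈ Q.legs y →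
    Disjoint (Q.legs x) (Q.legs y) →
    toFun (Q.comp a b x y) = P.comp a b (toFun x) (toFun y)
  map_xi : ∀ (a b : ℕ) (x : Q.El), a ∈ Q.legs x → b ∈ Q.legs x → a ≠ b →
    toFun (Q.xi a b x) = P.xi a b (toFun x)

/-- A list of blocks `L = [C₁, …, C_b]` is a valid presentation of an element
`{⟨C₁⟩, …, ⟨C_b⟩}` of `QO` iff there is at least one block, the blocks are
nonempty and they are duplicate-free and pairwise disjoint. -/
def QOValid (L : List (List ℕ)) : Prop :=
  L ≠ [] ∧ L.flatten.Nodup ∧ ∀ l ∈ L, l ≠ []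

/-- Two lists of blocks present the same element of `QO` iff one can be taken
to the other by permuting the blocks and rotating each block. -/
def QOEquiv (L L' : List (List ℕ)) : Prop :=
  ∃ L'' : List (List ℕ), L.Perm L'' ∧ List.Forall₂ (· ~r ·) L'' L'

/-- The modular operad `QO` of homeomorphism classes of 2D compact surfaces
with marked points on the boundary: a modular operad `Q` together with a
presentation `ofBlocks L g` of its elements, `ofBlocks [C₁, …, C_b] g` being the symbol
`{⟨C₁⟩, …, ⟨C_b⟩}^g` of geometric genus `g` and operadic genus
`G = 2g + b - 1`, with the relabeling action, composition (gluing two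
marked points on boundaries of two different surfaces) and contraction
(gluing two marked points of the same surface, either on the same boundary
component or on two different ones) given by the explicit formulas below.
The canonical inclusion `ι : Ass → QO` sends `⟨C⟩` to `ofBlocks [C] 0`. -/
structure QOperad where
  Q : ModularOperad
  ofBlocks : List (List ℕ) → ℕ → Q.El
  legs_mk : ∀ (L : List (List ℕ)) (g : ℕ), QOValid L →
    Q.legs (ofBlocks L g) = L.flatten.toFinset
  gen_mk : ∀ (L : List (List ℕ)) (g : ℕ), QOValid L →
    Q.gen (ofBlocks L g) = 2 * g + L.length - 1
  mk_equiv : ∀ (L L' : List (List ℕ)) (g : ℕ), QOValid L → QOEquiv L L' →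
    ofBlocks L g = ofBlocks L' g
  mk_inj : ∀ (L L' : List (List ℕ)) (g g' : ℕ), QOValid L → QOValid L' →
    ofBlocks L g = ofBlocks L' g' → g = g' ∧ QOEquiv L L'
  mk_surj : ∀ x : Q.El, ∃ (L : List (List ℕ)) (g : ℕ), QOValid L ∧ x = ofBlocks L g
  act_mk : ∀ (ρ : ℕ → ℕ) (L : List (List ℕ)) (g : ℕ), QOValid L →
    Set.InjOn ρ (L.flatten.toFinset : Set ℕ) →
    Q.act ρ (ofBlocks L g) = ofBlocks (L.map (List.map ρ)) g
  comp_mk : ∀ (X Y : List ℕ) (R R' : List (List ℕ)) (a b g g' : ℕ),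
    QOValid ((X ++ [a]) :: R) → QOValid ((b :: Y) :: R') →
    (((X ++ [a]) :: R).flatten ++ ((b :: Y) :: R').flatten).Nodup →
    X ++ Y ≠ [] →
    Q.comp a b (ofBlocks ((X ++ [a]) :: R) g) (ofBlocks ((b :: Y) :: R') g') =
      ofBlocks ((X ++ Y) :: (R ++ R')) (g + g')
  xi_same_mk : ∀ (A B : List ℕ) (R : List (List ℕ)) (a b g : ℕ),
    QOValid ((a :: (A ++ b :: B)) :: R) → A ≠ [] → B ≠ [] →
    Q.xi a b (ofBlocks ((a :: (A ++ b :: B)) :: R) g) = ofBlocks (B :: A :: R) g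
  xi_diff_mk : ∀ (A B : List ℕ) (R : List (List ℕ)) (a b g : ℕ),
    QOValid ((a :: A) :: (b :: B) :: R) → B ++ A ≠ [] →
    Q.xi a b (ofBlocks ((a :: A) :: (b :: B) :: R) g) = ofBlocks ((B ++ A) :: R) (g + 1)

/-- `xiChain P [(a₁,b₁), …, (aₙ,bₙ)] x = ξ_{a₁b₁}(ξ_{a₂b₂}(⋯(ξ_{aₙbₙ} x)))`. -/
def xiChain (P : ModularOperad) (prs : List (ℕ × ℕ)) (x : P.El) : P.El :=
  prs.foldr (fun p y => P.xi p.1 p.2 y) x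

/-- The pairs `(e₁,e₂), (e₃,e₄), …, (e_{2k-1}, e_{2k})` of contracted labels
(`e` is used with 1-based indices). -/
def pairList (e : ℕ → ℕ) (k : ℕ) : List (ℕ × ℕ) :=
  (List.range k).map fun i => (e (2 * i + 1), e (2 * i + 2))

/-- The list of contracted pairs of a canonical expression with `b` boundary
components and geometric genus `g`:
`ξ_{12} ξ_{34} ⋯ ξ_{2b-3,2b-2} ξ_{2b-1,2b+1} ξ_{2b,2b+2} ⋯ ξ_{2b+4g-5,2b+4g-3} ξ_{2b+4g-4,2b+4g-2}`
(indices of the fresh labels `e`, 1-based). -/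
def canonPairs (b g : ℕ) (e : ℕ → ℕ) : List (ℕ × ℕ) :=
  ((List.range (b - 1)).map fun i => (e (2 * i + 1), e (2 * i + 2))) ++
    ((List.range g).map fun j =>
      [(e (2 * b - 1 + 4 * j), e (2 * b + 1 + 4 * j)),
       (e (2 * b + 4 * j), e (2 * b + 2 + 4 * j))]).flatten

/-- The list `C₁ e₁ C₂ e₂ e₃ C₃ e₄ ⋯ e_{2b-3} C_b e_{2b-2} e_{2b-1} e_{2b} ⋯ e_{4g+2b-2}`
representing the cyclic order `a_q` of a canonical expression (`e` is used
with 1-based indices). -/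
def canonList (L : List (List ℕ)) (g : ℕ) (e : ℕ → ℕ) : List ℕ :=
  match L with
  | [] => []
  | C₁ :: rest =>
      C₁ ++ (rest.zipIdx.map fun p => e (2 * p.2 + 1) :: (p.1 ++ [e (2 * p.2 + 2)])).flatten
        ++ ((List.range (4 * g)).map fun j => e (2 * rest.length + 1 + j))

/-- `e 1, …, e n` are pairwise distinct labels avoiding the finite set `S`. -/
def FreshLabels (e : ℕ → ℕ) (n : ℕ) (S : Finset ℕ) : Prop :=
  Set.InjOn e (Set.Icc 1 n) ∧ ∀ i ∈ Set.Icc 1 n, e i ∉ S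

/-!
Let `u = ⟨a V c U⟩` and `v = ⟨b W d Z⟩`. Gluing them along `c, d` gives `⟨a V Z b W U⟩`, gluing
them along `a, b` gives `⟨c U W d Z V⟩`, and the exchange axiom identifies the `ξ_{ab}` of the
former with the `ξ_{cd}` of the latter. The right-hand side depends on `V, Z` only through `Z V`
and on `U, W` only through `U W`, so on the left-hand side each of the two arcs `V Z` and `W U`
may be rotated.
-/

section List

variable {α : Type*} {l l' : List α}

theorem exists_nodup_cons [Infinite α] (hl : l.Nodup) : ∃ a, (a :: l).Nodup := by
  classical
  obtain ⟨a, ha⟩ := Infinite.exists_notMem_finset l.toFinset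
  exact ⟨a, List.nodup_cons.2 ⟨mt List.mem_toFinset.2 ha, hl⟩⟩

theorem nodup_of_count_le [BEq α] [LawfulBEq α] (hl : l.Nodup) (h : ∀ a, l'.count a ≤ l.count a) :
    l'.Nodup :=
  List.nodup_iff_count.2 fun a => (h a).trans (List.nodup_iff_count.1 hl a)

theorem isRotated_iff_exists_append : l ~r l' ↔ ∃ s t, l = s ++ t ∧ l' = t ++ s := by
  constructor
  · intro h
    obtain ⟨n, hn, rfl⟩ := List.isRotated_iff_mod.1 h
    exact ⟨l.take n, l.drop n, (List.take_append_drop n l).symm,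
      List.rotate_eq_drop_append_take hn⟩
  · rintro ⟨s, t, rfl, rfl⟩
    exact List.isRotated_append

end List

namespace AssMorphism

variable {P : ModularOperad} (f : AssMorphism P)

theorem mem_legs_f {l : List ℕ} {a : ℕ} (hl : l.Nodup) (ha : a ∈ l) : a ∈ P.legs (f.f l) := by
  rwa [f.legs_f l (List.ne_nil_of_mem ha) hl, List.mem_toFinset]

theorem disjoint_legs_f {l l' : List ℕ} (hl : l ≠ []) (hl' : l' ≠ []) (h : (l ++ l').Nodup) :
    Disjoint (P.legs (f.f l)) (P.legs (f.f l')) := by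
  rw [f.legs_f l hl h.of_append_left, f.legs_f l' hl' h.of_append_right,
    List.disjoint_toFinset_iff_disjoint]
  exact List.disjoint_of_nodup_append h

theorem f_append_comm {X Y : List ℕ} (hne : X ++ Y ≠ []) (h : (X ++ Y).Nodup) :
    f.f (X ++ Y) = f.f (Y ++ X) :=
  f.f_rot _ _ hne h List.isRotated_append

theorem comp_f_append_cons {X X' Y Y' : List ℕ} {a b : ℕ} (hne : X ++ Y' ++ Y ++ X' ≠ [])
    (h : (X ++ a :: X' ++ (Y ++ b :: Y')).Nodup) :
    P.comp a b (f.f (X ++ a :: X')) (f.f (Y ++ b :: Y')) = f.f (X ++ Y' ++ Y ++ X') := by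
  have hX : f.f (X ++ a :: X') = f.f (X' ++ X ++ [a]) := by
    simpa using f.f_append_comm (X := X ++ [a]) (Y := X') (by simp)
      (by simpa using h.of_append_left)
  have hY : f.f (Y ++ b :: Y') = f.f (b :: (Y' ++ Y)) :=
    f.f_append_comm (by simp) h.of_append_right
  have hne' : X' ++ (X ++ Y' ++ Y) ≠ [] := fun hnil => hne (by simp_all)
  calc P.comp a b (f.f (X ++ a :: X')) (f.f (Y ++ b :: Y'))
      = f.f (X' ++ (X ++ Y' ++ Y)) := by
        rw [hX, hY, f.f_comp _ _ _ _ (nodup_of_count_le h (by grind)) (by simpa using hne')]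
        simp only [List.append_assoc]
    _ = f.f (X ++ Y' ++ Y ++ X') :=
        f.f_append_comm hne' (nodup_of_count_le h (by grind))

theorem xi_f_exchange {U V W Z : List ℕ} {a b c d : ℕ}
    (h : (a :: V ++ c :: U ++ (b :: W ++ d :: Z)).Nodup) :
    P.xi a b (f.f (a :: (V ++ Z) ++ b :: (W ++ U))) =
      P.xi c d (f.f (c :: (U ++ W) ++ d :: (Z ++ V))) := by
  have hglue_cd : P.comp c d (f.f (a :: V ++ c :: U)) (f.f (b :: W ++ d :: Z)) =
      f.f (a :: (V ++ Z) ++ b :: (W ++ U)) := by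
    simpa using f.comp_f_append_cons (X := a :: V) (Y := b :: W) (by simp) h
  have hglue_ab : P.comp a b (f.f (a :: V ++ c :: U)) (f.f (b :: W ++ d :: Z)) =
      f.f (c :: (U ++ W) ++ d :: (Z ++ V)) := by
    calc P.comp a b (f.f (a :: V ++ c :: U)) (f.f (b :: W ++ d :: Z))
        = f.f ((W ++ d :: (Z ++ V)) ++ c :: U) := by
          simpa using f.comp_f_append_cons (X := []) (Y := []) (by simp) h
      _ = f.f (c :: (U ++ W) ++ d :: (Z ++ V)) := by
          simpa using f.f_append_comm (X := W ++ d :: (Z ++ V)) (Y := c :: U) (by simp)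
            (nodup_of_count_le h (by grind))
  rw [← hglue_cd, ← hglue_ab]
  have hu {e : ℕ} (he : e ∈ a :: V ++ c :: U) : e ∈ P.legs (f.f (a :: V ++ c :: U)) :=
    f.mem_legs_f h.of_append_left he
  have hv {e : ℕ} (he : e ∈ b :: W ++ d :: Z) : e ∈ P.legs (f.f (b :: W ++ d :: Z)) :=
    f.mem_legs_f h.of_append_right he
  exact P.xi_comp_exchange a b c d _ _ (hu (by simp)) (hu (by simp)) (hv (by simp)) (hv (by simp))
    (by grind) (by grind) (f.disjoint_legs_f (by simp) (by simp) h)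

end AssMorphism

theorem main_lemma_general {P : ModularOperad} (f : AssMorphism P) {A A' C C' : List ℕ} {x y : ℕ}
    (hA : A ~r A') (hC : C ~r C') (hnd : (A ++ x :: (C ++ [y])).Nodup) :
    P.xi x y (f.f (A ++ x :: (C ++ [y]))) = P.xi x y (f.f (A' ++ x :: (C' ++ [y]))) := by
  obtain ⟨W, U, rfl, rfl⟩ := isRotated_iff_exists_append.1 hA
  obtain ⟨V, Z, rfl, rfl⟩ := isRotated_iff_exists_append.1 hC
  have hrot {A C : List ℕ} (h : (A ++ x :: (C ++ [y])).Nodup) :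
      f.f (A ++ x :: (C ++ [y])) = f.f (x :: C ++ y :: A) := by
    simpa using f.f_append_comm (X := A) (Y := x :: (C ++ [y])) (by simp) h
  have hnd' : (U ++ W ++ x :: (Z ++ V ++ [y])).Nodup := nodup_of_count_le hnd (by grind)
  obtain ⟨d, hd⟩ := exists_nodup_cons hnd
  obtain ⟨c, hcd⟩ := exists_nodup_cons hd
  have hexchange := f.xi_f_exchange (U := U) (V := V) (W := W) (Z := Z) (a := x) (b := y)
    (c := c) (d := d) (nodup_of_count_le hcd (by grind))
  have hexchange' := f.xi_f_exchange (U := U ++ W) (V := Z ++ V) (W := []) (Z := []) (a := x)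
    (b := y) (c := c) (d := d) (nodup_of_count_le hcd (by grind))
  rw [hrot hnd, hrot hnd', hexchange]
  simpa using hexchange'.symm

/-- (The Main Lemma.)
`ξ_{xy} f⟨A B x C y⟩ = ξ_{xy} f⟨B A x C y⟩`: if an arc joining `x` to `y`
cuts the circle into two semicircles, the labels on each semicircle may be
cyclically permuted without changing the contracted element. -/
theorem main_lemma (P : ModularOperad) (f : AssMorphism P)
    (A B C : List ℕ) (x y : ℕ)
    (hnd : (A ++ B ++ x :: (C ++ [y])).Nodup) :
    P.xi x y (f.f (A ++ B ++ x :: (C ++ [y]))) =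
      P.xi x y (f.f (B ++ A ++ x :: (C ++ [y]))) :=
  main_lemma_general f List.isRotated_append (.refl C) hnd
end

section
/- Let P be a modular operad in sets and f: Ass → P a morphism of cyclic operads. For q = {c₁,…,c_b}^g ∈ QO(C,G), the element ξ_{12}ξ_{34}⋯ξ_{2b−3,2b−2}ξ_{2b−1,2b+1}⋯ξ_{2b+4g−4,2b+4g−2} f(a_q) ∈ P(C,G) is the same for every canonical expression of q; i.e., it is independent of the choice of the fresh labels e₁,…,e_{2G}, of the representing tuples Cᵢ of the cyclic orders cᵢ, and of the order in which the cycles cᵢ appear in a_q. Hence f̃(q) := ξ_{12}ξ_{34}⋯ξ_{2b+4g−4,2b+4g−2} f(a_q) is a well-defined map f̃: QO → P. -/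
/-!
By two applications of the axiom `ξ_{ab}(x ∘_{c,d} y) = ξ_{cd}(x ∘_{a,b} y)`, the contraction
`ξ_{ab} f⟨a U b V⟩` depends only on the unordered pair of cyclic orders `⟨U⟩`, `⟨V⟩`. Since
contractions commute, this applies to each contracted pair of a canonical expression, whose value
therefore depends only on the cyclic word `a_q` modulo the moves `⟨a U b V⟩ ↦ ⟨a V' b U'⟩`, where
`(a, b)` is a contracted pair and `U'`, `V'` are rotations of `U`, `V`. Modulo these moves, each
block `e_{2i-1} C e_{2i}` and each handle commutes with all words, which allows one to rotate the
representing tuples and to permute them. A change of fresh labels is an instance of equivariance.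
-/

theorem exists_append_eq_of_isRotated {α : Type*} {l l' : List α} (h : l ~r l') :
    ∃ u v, l = u ++ v ∧ l' = v ++ u := by
  obtain ⟨n, rfl⟩ := h
  exact ⟨l.take (n % l.length), l.drop (n % l.length), (List.take_append_drop _ _).symm,
    List.rotate_eq_drop_append_take_mod⟩

section GluingWords

variable {α : Type*} {S : Set (α × α)}

/-- Equivalence of cyclic words whose letters `a` and `b` are to be glued for every `(a, b) ∈ S`.
Gluing `a` to `b` splits the cyclic word `⟨a U b V⟩` into the cycles `⟨U⟩` and `⟨V⟩`, so the two
cycles may be rotated independently and exchanged; the constructor `exchange` is the case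
`U = A' B`, `V = B' A`, from which the others follow. -/
inductive GluingEquiv (S : Set (α × α)) : List α → List α → Prop
  | of_isRotated {w w' : List α} (h : w ~r w') : GluingEquiv S w w'
  | exchange {a b : α} (hab : (a, b) ∈ S) (A A' B B' : List α) :
      GluingEquiv S (A ++ a :: A' ++ (B ++ b :: B')) (A' ++ a :: A ++ (B' ++ b :: B))
  | trans {u v w : List α} (huv : GluingEquiv S u v) (hvw : GluingEquiv S v w) : GluingEquiv S u w

local notation:50 u:51 " ∼[" S "] " v:51 => GluingEquiv S u v

instance : Trans (GluingEquiv S) (GluingEquiv S) (GluingEquiv S) := ⟨.trans⟩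

namespace GluingEquiv

theorem refl (w : List α) : w ∼[S] w := of_isRotated (.refl w)

theorem symm {w w' : List α} (h : w ∼[S] w') : w' ∼[S] w := by
  induction h with
  | of_isRotated h => exact of_isRotated h.symm
  | exchange hab A A' B B' => exact exchange hab A' A B' B
  | trans _ _ ihuv ihvw => exact ihvw.trans ihuv

theorem perm {w w' : List α} (h : w ∼[S] w') : w.Perm w' := by
  induction h with
  | of_isRotated h => exact h.perm
  | @exchange a b _ A A' B B' =>
    have swap (x : α) (X Y : List α) : (X ++ x :: Y).Perm (Y ++ x :: X) :=
      List.perm_middle.trans ((List.perm_append_comm.cons x).trans List.perm_middle.symm)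
    exact (swap a A A').append (swap b B B')
  | trans _ _ ihuv ihvw => exact ihuv.trans ihvw

theorem rotate {w w' : List α} (X Y : List α) (hw : w = X ++ Y := by simp)
    (hw' : w' = Y ++ X := by simp) : w ∼[S] w' :=
  hw ▸ hw' ▸ of_isRotated List.isRotated_append

theorem swap_cycles {a b : α} (hab : (a, b) ∈ S) {U U' V V' : List α} (hU : U ~r U')
    (hV : V ~r V') : a :: (U ++ b :: V) ∼[S] a :: (V' ++ b :: U') := by
  obtain ⟨A', B, rfl, rfl⟩ := exists_append_eq_of_isRotated hU
  obtain ⟨B', A, rfl, rfl⟩ := exists_append_eq_of_isRotated hV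
  calc a :: (A' ++ B ++ b :: (B' ++ A))
      ∼[S] A ++ a :: A' ++ (B ++ b :: B') := rotate (a :: (A' ++ B ++ b :: B')) A
    _ ∼[S] A' ++ a :: A ++ (B' ++ b :: B) := exchange hab A A' B B'
    _ ∼[S] a :: (A ++ B' ++ b :: (B ++ A')) := rotate A' (a :: (A ++ B' ++ b :: B))

theorem rotate_cycles {a b : α} (hab : (a, b) ∈ S) {U U' V V' : List α} (hU : U ~r U')
    (hV : V ~r V') : a :: (U ++ b :: V) ∼[S] a :: (U' ++ b :: V') :=
  (swap_cycles hab hU hV).trans (swap_cycles hab (.refl _) (.refl _))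

end GluingEquiv

/-- Two words are interchangeable if replacing one by the other as a subword preserves the gluing
equivalence class. This is a monoid congruence on words. Since words are cyclic, only a context on
the right is needed. -/
def Interchangeable (S : Set (α × α)) (U V : List α) : Prop := ∀ W, U ++ W ∼[S] V ++ W

local notation:50 U:51 " ≡[" S "] " V:51 => Interchangeable S U V

namespace Interchangeable

theorem refl (U : List α) : U ≡[S] U := fun _ => .refl _

theorem trans {U V W : List α} (hUV : U ≡[S] V) (hVW : V ≡[S] W) : U ≡[S] W :=
  fun X => (hUV X).trans (hVW X)

instance : Trans (Interchangeable S) (Interchangeable S) (Interchangeable S) := ⟨trans⟩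

theorem append {U U' V V' : List α} (hU : U ≡[S] U') (hV : V ≡[S] V') :
    U ++ V ≡[S] U' ++ V' := fun W =>
  calc U ++ V ++ W
      ∼[S] U' ++ (V ++ W) := by simpa using hU (V ++ W)
    _ ∼[S] V ++ (W ++ U') := .rotate U' (V ++ W)
    _ ∼[S] V' ++ (W ++ U') := hV (W ++ U')
    _ ∼[S] U' ++ V' ++ W := .rotate (V' ++ W) U'

theorem gluingEquiv {U V : List α} (h : U ≡[S] V) : U ∼[S] V := by simpa using h []

theorem append_gluingEquiv {U V : List α} (A B : List α) (h : U ≡[S] V) :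
    A ++ (U ++ B) ∼[S] A ++ (V ++ B) :=
  ((refl A).append (h.append (refl B))).gluingEquiv

end Interchangeable

/-- A word is central if it commutes with every word up to interchangeability. -/
def IsCentral (S : Set (α × α)) (M : List α) : Prop := ∀ X, X ++ M ≡[S] M ++ X

namespace IsCentral

theorem nil : IsCentral S ([] : List α) := fun X => by
  simpa using Interchangeable.refl X

theorem append {M N : List α} (hM : IsCentral S M) (hN : IsCentral S N) :
    IsCentral S (M ++ N) := fun X =>
  calc X ++ (M ++ N)
      ≡[S] M ++ X ++ N := by simpa using (hM X).append (.refl N)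
    _ ≡[S] M ++ N ++ X := by simpa using (Interchangeable.refl M).append (hN X)

theorem flatMap {β : Type*} {F : β → List α} {l : List β} (h : ∀ i ∈ l, IsCentral S (F i)) :
    IsCentral S (l.flatMap F) := by
  induction l with
  | nil => exact nil
  | cons i l ih =>
    rw [List.forall_mem_cons] at h
    exact h.1.append (ih h.2)

theorem move {M : List α} (hM : IsCentral S M) (A X B : List α) :
    A ++ (X ++ (M ++ B)) ∼[S] A ++ (M ++ (X ++ B)) := by
  simpa using (hM X).append_gluingEquiv A B

theorem block {a b : α} (hab : (a, b) ∈ S) (C : List α) : IsCentral S (a :: (C ++ [b])) :=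
  fun X W =>
  calc X ++ a :: (C ++ [b]) ++ W
      ∼[S] a :: (C ++ b :: (W ++ X)) := .rotate X (a :: (C ++ b :: W))
    _ ∼[S] a :: (C ++ b :: (X ++ W)) := .rotate_cycles hab (.refl C) List.isRotated_append
    _ ∼[S] a :: (C ++ [b]) ++ X ++ W := by simpa using .refl _

theorem handle {a b c d : α} (hac : (a, c) ∈ S) (hbd : (b, d) ∈ S) : IsCentral S [a, b, c, d] :=
  fun X W =>
  calc X ++ [a, b, c, d] ++ W
      ∼[S] a :: ([b] ++ c :: (d :: W ++ X)) := .rotate X ([a, b, c, d] ++ W)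
    _ ∼[S] a :: ([b] ++ c :: (X ++ d :: W)) :=
      .rotate_cycles hac (.refl _) List.isRotated_append
    _ ∼[S] b :: (c :: X ++ d :: (W ++ [a])) := .rotate [a] (b :: c :: (X ++ d :: W))
    _ ∼[S] b :: (a :: W ++ d :: (X ++ [c])) :=
      .swap_cycles hbd (List.isRotated_append (l := [c])) (List.isRotated_append (l' := [a]))
    _ ∼[S] a :: (W ++ d :: X ++ c :: [b]) := .rotate [b] (a :: W ++ d :: (X ++ [c]))
    _ ∼[S] a :: ([b] ++ c :: (d :: X ++ W)) :=
      .swap_cycles hac List.isRotated_append (.refl _)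
    _ ∼[S] [a, b, c, d] ++ X ++ W := by simpa using .refl _

end IsCentral

theorem interchangeable_block_of_isRotated {a b : α} (hab : (a, b) ∈ S) {C D : List α}
    (h : C ~r D) : a :: (C ++ [b]) ≡[S] a :: (D ++ [b]) := fun W => by
  simpa using GluingEquiv.rotate_cycles hab h (.refl W)

theorem interchangeable_block_swap {a b c d : α} (hab : (a, b) ∈ S) (hcd : (c, d) ∈ S)
    (C D : List α) :
    a :: (C ++ [b]) ++ c :: (D ++ [d]) ≡[S] a :: (D ++ [b]) ++ c :: (C ++ [d]) := fun W =>
  calc a :: (C ++ [b]) ++ c :: (D ++ [d]) ++ W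
      ∼[S] a :: (C ++ c :: (D ++ d :: b :: W)) := by
        simpa using (IsCentral.block hcd D).move (a :: C) [b] W
    _ ∼[S] c :: (D ++ d :: (b :: W ++ a :: C)) := .rotate (a :: C) (c :: (D ++ d :: b :: W))
    _ ∼[S] c :: (b :: W ++ a :: C ++ d :: D) := .swap_cycles hcd (.refl _) (.refl _)
    _ ∼[S] a :: (C ++ d :: D ++ [c] ++ b :: W) := .rotate (c :: b :: W) (a :: (C ++ d :: D))
    _ ∼[S] a :: (D ++ c :: (C ++ [d]) ++ b :: W) := .rotate_cycles hab (by
        simpa using List.isRotated_append (l := C ++ [d]) (l' := D ++ [c])) (.refl W)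
    _ ∼[S] a :: (D ++ [b]) ++ c :: (C ++ [d]) ++ W := by
        simpa using ((IsCentral.block hcd C).move (a :: D) [b] W).symm

/-- The word `a₁ C₁ b₁ a₂ C₂ b₂ ⋯` for the pairs `(aᵢ, bᵢ)` and the words `Cᵢ`; gluing `aᵢ` to `bᵢ`
makes each `Cᵢ` a separate cycle. -/
def blocks : List (α × α) → List (List α) → List α
  | p :: ps, C :: Cs => p.1 :: (C ++ [p.2]) ++ blocks ps Cs
  | _, _ => []

theorem isCentral_blocks : ∀ {ps : List (α × α)} (Cs : List (List α)), (∀ p ∈ ps, p ∈ S) →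
    IsCentral S (blocks ps Cs)
  | [], _, _ => .nil
  | _ :: _, [], _ => .nil
  | _ :: _, C :: Cs, h =>
    (IsCentral.block (h _ List.mem_cons_self) C).append
      (isCentral_blocks Cs fun p hp => h p (List.mem_cons_of_mem _ hp))

theorem interchangeable_blocks_of_forall₂_isRotated {Cs Ds : List (List α)}
    (h : List.Forall₂ (· ~r ·) Cs Ds) {ps : List (α × α)} (hps : ∀ p ∈ ps, p ∈ S) :
    blocks ps Cs ≡[S] blocks ps Ds := by
  induction h generalizing ps with
  | nil => exact .refl _
  | cons hCD _ ih =>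
    rcases ps with _ | ⟨p, ps⟩
    · exact .refl _
    · rw [List.forall_mem_cons] at hps
      exact (interchangeable_block_of_isRotated hps.1 hCD).append (ih hps.2)

theorem interchangeable_blocks_of_perm {Cs Ds : List (List α)} (h : Cs.Perm Ds)
    {ps : List (α × α)} (hlen : ps.length = Cs.length) (hps : ∀ p ∈ ps, p ∈ S) :
    blocks ps Cs ≡[S] blocks ps Ds := by
  induction h generalizing ps with
  | nil => exact .refl _
  | cons C _ ih =>
    obtain ⟨p, ps, rfl⟩ := List.exists_cons_of_length_eq_add_one hlen
    rw [List.forall_mem_cons] at hps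
    exact (Interchangeable.refl _).append (ih (by simpa using hlen) hps.2)
  | swap C D Cs =>
    obtain ⟨p, qs, rfl⟩ := List.exists_cons_of_length_eq_add_one hlen
    obtain ⟨q, ps, rfl⟩ := List.exists_cons_of_length_eq_add_one (Nat.succ_inj.1 hlen)
    simp only [List.forall_mem_cons] at hps
    simpa [blocks] using
      (interchangeable_block_swap hps.1 hps.2.1 D C).append (.refl (blocks ps Cs))
  | trans hCs _ ih₁ ih₂ => exact (ih₁ hlen hps).trans (ih₂ (hlen.trans hCs.length_eq) hps)

namespace IsCentral

theorem gluingEquiv_of_isRotated_head {M : List α} (hM : IsCentral S M) {C D : List α}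
    (h : C ~r D) : C ++ M ∼[S] D ++ M := by
  obtain ⟨U, V, rfl, rfl⟩ := exists_append_eq_of_isRotated h
  calc U ++ V ++ M
      ∼[S] U ++ (M ++ V) := by simpa using hM.move U V []
    _ ∼[S] V ++ U ++ M := .rotate (U ++ M) V

theorem gluingEquiv_swap_head {M : List α} (hM : IsCentral S M) {a b : α} (hab : (a, b) ∈ S)
    (C D : List α) : C ++ (a :: (D ++ [b]) ++ M) ∼[S] D ++ (a :: (C ++ [b]) ++ M) :=
  calc C ++ (a :: (D ++ [b]) ++ M)
      ∼[S] a :: (D ++ b :: (M ++ C)) := .rotate C (a :: (D ++ b :: M))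
    _ ∼[S] a :: (C ++ M ++ b :: D) := .swap_cycles hab (.refl D) List.isRotated_append
    _ ∼[S] a :: (C ++ b :: (M ++ D)) := by simpa using (hM.move (a :: C) [b] D).symm
    _ ∼[S] D ++ (a :: (C ++ [b]) ++ M) := .rotate (a :: (C ++ b :: M)) D

end IsCentral

/-- The word `C₁ a₁ C₂ b₁ a₂ C₃ b₂ ⋯ M`, whose pairs `(aᵢ, bᵢ)` separate the cycles `Cᵢ`. -/
def surfaceWord (ps : List (α × α)) (M : List α) : List (List α) → List α
  | [] => []
  | C :: Cs => C ++ (blocks ps Cs ++ M)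

theorem surfaceWord_gluingEquiv_of_forall₂_isRotated {L L' : List (List α)}
    (h : List.Forall₂ (· ~r ·) L L') {ps : List (α × α)} (hps : ∀ p ∈ ps, p ∈ S)
    {M : List α} (hM : IsCentral S M) : surfaceWord ps M L ∼[S] surfaceWord ps M L' := by
  cases h with
  | nil => exact .refl _
  | @cons C D Cs Ds hCD hCs =>
    calc C ++ (blocks ps Cs ++ M)
        ∼[S] D ++ (blocks ps Cs ++ M) :=
          ((isCentral_blocks Cs hps).append hM).gluingEquiv_of_isRotated_head hCD
      _ ∼[S] D ++ (blocks ps Ds ++ M) :=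
          (interchangeable_blocks_of_forall₂_isRotated hCs hps).append_gluingEquiv D M

theorem surfaceWord_gluingEquiv_of_perm {L L' : List (List α)} (h : L.Perm L')
    {ps : List (α × α)} (hlen : L.length = ps.length + 1) (hps : ∀ p ∈ ps, p ∈ S)
    {M : List α} (hM : IsCentral S M) : surfaceWord ps M L ∼[S] surfaceWord ps M L' := by
  induction h with
  | nil => exact .refl _
  | cons C h _ =>
    exact (interchangeable_blocks_of_perm h (Nat.succ_inj.1 hlen).symm hps).append_gluingEquiv C M
  | swap C D Cs =>
    obtain ⟨p, ps, rfl⟩ := List.exists_cons_of_length_eq_add_one (Nat.succ_inj.1 hlen).symm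
    rw [List.forall_mem_cons] at hps
    simpa [surfaceWord, blocks] using
      ((isCentral_blocks Cs hps.2).append hM).gluingEquiv_swap_head hps.1 D C
  | trans hL _ ih₁ ih₂ => exact (ih₁ hlen).trans (ih₂ (hL.length_eq ▸ hlen))

end GluingWords

section Contractions

/-- The letters `a₁, b₁, a₂, b₂, …` of a list of pairs `(aᵢ, bᵢ)`. -/
def labels {α : Type*} (ps : List (α × α)) : List α := ps.flatMap fun p => [p.1, p.2]

/-- The successive contractions along `ps` make sense on an element with legs `s`. -/
def Admissible (ps : List (ℕ × ℕ)) (s : Finset ℕ) : Prop :=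
  (labels ps).Nodup ∧ ∀ i ∈ labels ps, i ∈ s

theorem admissible_cons {p : ℕ × ℕ} {ps : List (ℕ × ℕ)} {s : Finset ℕ} :
    Admissible (p :: ps) s ↔ p.1 ≠ p.2 ∧ p.1 ∈ s \ (labels ps).toFinset ∧
      p.2 ∈ s \ (labels ps).toFinset ∧ Admissible ps s := by
  simp only [Admissible, labels, List.flatMap_cons, List.cons_append, List.nil_append,
    List.nodup_cons, List.mem_cons, forall_eq_or_imp, Finset.mem_sdiff, List.mem_toFinset]
  tauto

theorem Admissible.perm {ps qs : List (ℕ × ℕ)} {s : Finset ℕ} (h : Admissible ps s)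
    (hpq : ps.Perm qs) : Admissible qs s :=
  have hlabels : (labels ps).Perm (labels qs) := hpq.flatMap_right _
  ⟨hlabels.nodup_iff.1 h.1, fun i hi => h.2 i (hlabels.mem_iff.2 hi)⟩

variable {P : ModularOperad}

theorem legs_xiChain {x : P.El} {ps : List (ℕ × ℕ)} (h : Admissible ps (P.legs x)) :
    P.legs (xiChain P ps x) = P.legs x \ (labels ps).toFinset := by
  induction ps with
  | nil => simp [xiChain, labels]
  | cons p ps ih =>
    obtain ⟨hne, h₁, h₂, hps⟩ := admissible_cons.1 h
    rw [← ih hps] at h₁ h₂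
    calc P.legs (P.xi p.1 p.2 (xiChain P ps x))
        = ((P.legs x \ (labels ps).toFinset).erase p.1).erase p.2 := by
          rw [P.legs_xi _ _ _ h₁ h₂ hne, ih hps]
      _ = P.legs x \ (labels (p :: ps)).toFinset := by
          ext i
          simp only [labels, Finset.mem_erase, Finset.mem_sdiff, List.mem_toFinset,
            List.flatMap_cons, List.mem_append, List.mem_cons, List.not_mem_nil]
          tauto

theorem xiChain_eq_of_perm {x : P.El} {ps qs : List (ℕ × ℕ)} (hpq : ps.Perm qs)
    (h : Admissible ps (P.legs x)) : xiChain P ps x = xiChain P qs x := by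
  induction hpq with
  | nil => rfl
  | cons p _ ih => exact congrArg (P.xi p.1 p.2) (ih (admissible_cons.1 h).2.2.2)
  | swap p q ps =>
    obtain ⟨hq, hq₁, hq₂, hps⟩ := admissible_cons.1 h
    obtain ⟨hp, hp₁, hp₂, hps⟩ := admissible_cons.1 hps
    simp only [labels, List.flatMap_cons, Finset.mem_sdiff, List.mem_toFinset, List.mem_append,
      List.mem_cons, List.not_mem_nil, or_false, not_or] at hq₁ hq₂
    have hlegs := legs_xiChain hps
    have mem_legs {i : ℕ} (hi : i ∈ P.legs x) (hi' : i ∉ labels ps) :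
        i ∈ P.legs (xiChain P ps x) := by
      rw [hlegs, Finset.mem_sdiff, List.mem_toFinset]
      exact ⟨hi, hi'⟩
    rw [← hlegs] at hp₁ hp₂
    exact P.xi_xi _ _ _ _ _ (mem_legs hq₁.1 hq₁.2.2) (mem_legs hq₂.1 hq₂.2.2) hp₁ hp₂ hq hp
      hq₁.2.1.1 hq₁.2.1.2 hq₂.2.1.1 hq₂.2.1.2
  | trans hpq _ ih₁ ih₂ => exact (ih₁ h).trans (ih₂ (h.perm hpq))

theorem act_xiChain {x : P.El} {ps : List (ℕ × ℕ)} {ρ : ℕ → ℕ}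
    (hρ : Set.InjOn ρ (P.legs x : Set ℕ)) (h : Admissible ps (P.legs x)) :
    P.act ρ (xiChain P ps x) = xiChain P (ps.map (Prod.map ρ ρ)) (P.act ρ x) := by
  induction ps with
  | nil => rfl
  | cons p ps ih =>
    obtain ⟨hne, h₁, h₂, hps⟩ := admissible_cons.1 h
    have hlegs := legs_xiChain hps
    rw [← hlegs] at h₁ h₂
    have hρ' : Set.InjOn ρ (P.legs (xiChain P ps x) : Set ℕ) :=
      hρ.mono (by simp [hlegs])
    exact (P.act_xi ρ _ _ _ h₁ h₂ hne hρ').trans (congrArg (P.xi _ _) (ih hps))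

theorem xiChain_append (ps qs : List (ℕ × ℕ)) (x : P.El) :
    xiChain P (ps ++ qs) x = xiChain P ps (xiChain P qs x) :=
  List.foldr_append

/-- The word `w` represents a cyclic order on a set of labels that can be contracted along `ps`. -/
structure Gluable (ps : List (ℕ × ℕ)) (w : List ℕ) : Prop where
  ne_nil : w ≠ []
  nodup : w.Nodup
  admissible : Admissible ps w.toFinset

theorem Gluable.perm {ps : List (ℕ × ℕ)} {w w' : List ℕ} (h : Gluable ps w) (hw : w.Perm w') :
    Gluable ps w' where
  ne_nil := by
    rintro rfl
    exact h.ne_nil hw.eq_nil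
  nodup := hw.nodup_iff.1 h.nodup
  admissible := List.toFinset_eq_of_perm _ _ hw ▸ h.admissible

variable (f : AssMorphism P)

theorem Gluable.admissible_legs {ps : List (ℕ × ℕ)} {w : List ℕ} (h : Gluable ps w) :
    Admissible ps (P.legs (f.f w)) :=
  (f.legs_f w h.ne_nil h.nodup).symm ▸ h.admissible

theorem xiChain_map {ps : List (ℕ × ℕ)} {w : List ℕ} (h : Gluable ps w) {ρ : ℕ → ℕ}
    (hρ : Set.InjOn ρ (w.toFinset : Set ℕ)) (hfix : ∀ i ∈ w, i ∉ labels ps → ρ i = i) :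
    xiChain P (ps.map (Prod.map ρ ρ)) (f.f (w.map ρ)) = xiChain P ps (f.f w) := by
  have hlegs := f.legs_f w h.ne_nil h.nodup
  have hps := h.admissible_legs f
  calc xiChain P (ps.map (Prod.map ρ ρ)) (f.f (w.map ρ))
      = P.act ρ (xiChain P ps (f.f w)) := by
        rw [f.f_act ρ w h.ne_nil h.nodup hρ, act_xiChain (hlegs ▸ hρ) hps]
    _ = P.act id (xiChain P ps (f.f w)) := by
        refine P.act_congr _ _ _ fun i hi => ?_
        rw [legs_xiChain hps, hlegs, Finset.mem_sdiff, List.mem_toFinset, List.mem_toFinset] at hi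
        exact hfix i hi.1 hi.2
    _ = xiChain P ps (f.f w) := P.act_id _

/- Cut the cycle between `A'` and `B` and between `B'` and `A`: it becomes a composition along
fresh labels `c, d`, and the exchange axiom lets `ξ_{ab}` and `∘_{cd}` trade places. -/
theorem xi_exchange_fresh {a b c d : ℕ} {A A' B B' : List ℕ}
    (hw : (A ++ a :: A' ++ c :: d :: (B ++ b :: B')).Nodup) :
    P.xi a b (f.f (A ++ a :: A' ++ (B ++ b :: B'))) =
      P.xi c d (f.f (A' ++ c :: A ++ (B' ++ d :: B))) := by
  have hperm : (A ++ a :: A' ++ c :: d :: (B ++ b :: B')).Perm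
      (A' ++ c :: A ++ a :: b :: (B' ++ d :: B)) := by
    refine List.perm_iff_count.2 fun i => ?_
    simp only [List.count_append, List.count_cons]
    ring
  obtain ⟨hx, hy, hxy⟩ : (A ++ a :: A' ++ [c]).Nodup ∧ (d :: (B ++ b :: B')).Nodup ∧
      (A ++ a :: A' ++ [c]).Disjoint (d :: (B ++ b :: B')) :=
    List.nodup_append'.1 (by simpa using hw)
  have hac : a ≠ c := by
    rintro rfl
    simp [List.nodup_middle] at hx
  have hbd : b ≠ d := by
    rintro rfl
    simp at hy
  have hx_legs := f.legs_f _ (by simp) hx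
  have hy_legs := f.legs_f _ (by simp) hy
  have hlegs : Disjoint (P.legs (f.f (A ++ a :: A' ++ [c])))
      (P.legs (f.f (d :: (B ++ b :: B')))) := by
    rwa [hx_legs, hy_legs, List.disjoint_toFinset_iff_disjoint]
  have hx_rot : f.f (A ++ a :: A' ++ [c]) = f.f (A' ++ c :: A ++ [a]) :=
    f.f_rot _ _ (by simp) hx
      (by simpa using List.isRotated_append (l := A ++ [a]) (l' := A' ++ [c]))
  have hy_rot : f.f (d :: (B ++ b :: B')) = f.f (b :: (B' ++ d :: B)) :=
    f.f_rot _ _ (by simp) hy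
      (by simpa using List.isRotated_append (l := d :: B) (l' := b :: B'))
  calc P.xi a b (f.f (A ++ a :: A' ++ (B ++ b :: B')))
      = P.xi a b (P.comp c d (f.f (A ++ a :: A' ++ [c])) (f.f (d :: (B ++ b :: B')))) := by
        rw [f.f_comp _ _ c d hw (by simp)]
    _ = P.xi c d (P.comp a b (f.f (A ++ a :: A' ++ [c])) (f.f (d :: (B ++ b :: B')))) :=
        P.xi_comp_exchange a b c d _ _ (by rw [hx_legs]; simp) (by rw [hx_legs]; simp)
          (by simp [hy_legs]) (by simp [hy_legs]) hac hbd hlegs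
    _ = P.xi c d (f.f (A' ++ c :: A ++ (B' ++ d :: B))) := by
        rw [hx_rot, hy_rot, f.f_comp _ _ a b (hperm.nodup_iff.1 hw) (by simp)]

theorem xi_exchange {a b : ℕ} {A A' B B' : List ℕ}
    (hw : (A ++ a :: A' ++ (B ++ b :: B')).Nodup) :
    P.xi a b (f.f (A ++ a :: A' ++ (B ++ b :: B'))) =
      P.xi a b (f.f (A' ++ a :: A ++ (B' ++ b :: B))) := by
  obtain ⟨d, hd⟩ := (A ++ a :: A' ++ (B ++ b :: B')).toFinset.exists_notMem
  obtain ⟨c, hc⟩ := (d :: (A ++ a :: A' ++ (B ++ b :: B'))).toFinset.exists_notMem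
  rw [List.mem_toFinset] at hc hd
  have hcd : (c :: d :: (A ++ a :: A' ++ (B ++ b :: B'))).Nodup := .cons hc (.cons hd hw)
  have nodup_of_count {l : List ℕ}
      (h : ∀ i, l.count i ≤ (c :: d :: (A ++ a :: A' ++ (B ++ b :: B'))).count i) : l.Nodup :=
    List.nodup_iff_count_le_one.2 fun i => (h i).trans (List.nodup_iff_count_le_one.1 hcd i)
  have hcut : (A ++ a :: A' ++ c :: d :: (B ++ b :: B')).Nodup := nodup_of_count fun i => by
    simp only [List.count_append, List.count_cons]; lia
  have hcut' : ([] ++ d :: [] ++ a :: b :: (B ++ A' ++ c :: (A ++ B'))).Nodup :=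
    nodup_of_count fun i => by
      simp only [List.count_append, List.count_cons, List.count_nil]; lia
  have hrot : f.f (A' ++ c :: A ++ (B' ++ d :: B)) = f.f (d :: (B ++ A' ++ c :: (A ++ B'))) :=
    f.f_rot _ _ (by simp)
      (nodup_of_count fun i => by simp only [List.count_append, List.count_cons]; lia)
      (by simpa using List.isRotated_append (l := A' ++ c :: A ++ B') (l' := d :: B))
  have hrot' : f.f (a :: (A ++ B' ++ b :: (B ++ A'))) = f.f (A' ++ a :: A ++ (B' ++ b :: B)) :=
    f.f_rot _ _ (by simp)
      (nodup_of_count fun i => by simp only [List.count_append, List.count_cons]; lia)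
      (by simpa using List.isRotated_append (l := a :: (A ++ B' ++ b :: B)) (l' := A'))
  calc P.xi a b (f.f (A ++ a :: A' ++ (B ++ b :: B')))
      = P.xi c d (f.f (A' ++ c :: A ++ (B' ++ d :: B))) := xi_exchange_fresh f hcut
    _ = P.xi d c (f.f (d :: (B ++ A' ++ c :: (A ++ B')))) := by rw [hrot, P.xi_symm]
    _ = P.xi a b (f.f (a :: (A ++ B' ++ b :: (B ++ A')))) := xi_exchange_fresh f hcut'
    _ = P.xi a b (f.f (A' ++ a :: A ++ (B' ++ b :: B))) := by rw [hrot']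

theorem xiChain_eq_of_gluingEquiv {ps : List (ℕ × ℕ)} {w w' : List ℕ}
    (h : GluingEquiv {p | p ∈ ps} w w') (hw : Gluable ps w) :
    xiChain P ps (f.f w) = xiChain P ps (f.f w') := by
  induction h with
  | of_isRotated h => rw [f.f_rot _ _ hw.ne_nil hw.nodup h]
  | @exchange a b hab A A' B B' =>
    have hw' := hw.perm (GluingEquiv.exchange hab A A' B B').perm
    have hps : ps.Perm (ps.erase (a, b) ++ [(a, b)]) :=
      (List.perm_cons_erase hab).trans (List.perm_append_singleton _ _).symm
    rw [xiChain_eq_of_perm hps (hw.admissible_legs f),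
      xiChain_eq_of_perm hps (hw'.admissible_legs f), xiChain_append, xiChain_append]
    exact congrArg _ (xi_exchange f hw.nodup)
  | trans huv _ ih₁ ih₂ => exact (ih₁ hw).trans (ih₂ (hw.perm huv.perm))

end Contractions

section CanonicalExpressions

theorem labels_pairList (e : ℕ → ℕ) (k : ℕ) :
    labels (pairList e k) = (List.range' 1 (2 * k)).map e := by
  induction k with
  | zero => rfl
  | succ k ih =>
    simp only [labels, pairList, List.flatMap_map] at ih ⊢
    rw [List.range_succ, List.flatMap_append, ih, Nat.mul_succ, ← List.range'_append_1]
    simp [List.range'_succ, Nat.add_comm 1]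

/-- The pairs `(e_s, e_{s+2}), (e_{s+1}, e_{s+3}), …` glued in `g` consecutive handles. -/
def handlePairs (e : ℕ → ℕ) (s g : ℕ) : List (ℕ × ℕ) :=
  (List.range g).flatMap fun j =>
    [(e (s + 4 * j), e (s + 4 * j + 2)), (e (s + 4 * j + 1), e (s + 4 * j + 3))]

theorem handlePairs_succ (e : ℕ → ℕ) (s g : ℕ) :
    handlePairs e s (g + 1) = handlePairs e s g ++
      [(e (s + 4 * g), e (s + 4 * g + 2)), (e (s + 4 * g + 1), e (s + 4 * g + 3))] := by
  simp [handlePairs, List.range_succ]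

theorem map_range'_mul_four_succ (e : ℕ → ℕ) (s g : ℕ) :
    (List.range' s (4 * (g + 1))).map e = (List.range' s (4 * g)).map e ++
      [e (s + 4 * g), e (s + 4 * g + 1), e (s + 4 * g + 2), e (s + 4 * g + 3)] := by
  rw [Nat.mul_succ, ← List.range'_append_1, List.map_append]
  rfl

theorem labels_handlePairs_perm (e : ℕ → ℕ) (s g : ℕ) :
    (labels (handlePairs e s g)).Perm ((List.range' s (4 * g)).map e) := by
  induction g with
  | zero => rfl
  | succ g ih =>
    rw [handlePairs_succ, map_range'_mul_four_succ, labels, List.flatMap_append]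
    exact ih.append ((List.Perm.swap _ _ _).cons _)

theorem isCentral_map_range' {e : ℕ → ℕ} {s g : ℕ} {S : Set (ℕ × ℕ)}
    (h : ∀ p ∈ handlePairs e s g, p ∈ S) : IsCentral S ((List.range' s (4 * g)).map e) := by
  induction g with
  | zero => exact .nil
  | succ g ih =>
    rw [handlePairs_succ] at h
    rw [map_range'_mul_four_succ]
    exact (ih fun p hp => h p (List.mem_append_left _ hp)).append
      (.handle (h _ (by simp)) (h _ (by simp)))

theorem canonPairs_succ (k g : ℕ) (e : ℕ → ℕ) :
    canonPairs (k + 1) g e = pairList e k ++ handlePairs e (2 * k + 1) g := by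
  simp [canonPairs, pairList, handlePairs, List.flatMap_def, Nat.mul_succ, add_right_comm]

theorem labels_canonPairs_perm (k g : ℕ) (e : ℕ → ℕ) :
    (labels (canonPairs (k + 1) g e)).Perm ((List.range' 1 (2 * k + 4 * g)).map e) := by
  rw [canonPairs_succ, labels, List.flatMap_append, ← List.range'_append_1, List.map_append,
    add_comm 1]
  exact (List.Perm.of_eq (labels_pairList e k)).append (labels_handlePairs_perm e (2 * k + 1) g)

theorem blocks_map_range' (e : ℕ → ℕ) (Cs : List (List ℕ)) (k : ℕ) :
    blocks ((List.range' k Cs.length).map fun i => (e (2 * i + 1), e (2 * i + 2))) Cs =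
      ((Cs.zipIdx k).map fun p => e (2 * p.2 + 1) :: (p.1 ++ [e (2 * p.2 + 2)])).flatten := by
  induction Cs generalizing k with
  | nil => rfl
  | cons C Cs ih => simp [blocks, List.range'_succ, ih]

theorem canonList_eq_surfaceWord {L : List (List ℕ)} {k : ℕ} (hk : L.length = k + 1) (g : ℕ)
    (e : ℕ → ℕ) : canonList L g e =
      surfaceWord (pairList e k) ((List.range' (2 * k + 1) (4 * g)).map e) L := by
  obtain ⟨C, Cs, rfl⟩ := List.exists_cons_of_length_eq_add_one hk
  obtain rfl : Cs.length = k := Nat.succ_inj.1 hk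
  rw [canonList, surfaceWord, pairList, List.range_eq_range' (n := Cs.length), blocks_map_range',
    List.range'_eq_map_range, List.map_map, List.append_assoc]
  rfl

theorem blocks_perm {α : Type*} : ∀ {ps : List (α × α)} {Cs : List (List α)},
    ps.length = Cs.length → (blocks ps Cs).Perm (Cs.flatten ++ labels ps)
  | [], [], _ => .rfl
  | p :: ps, C :: Cs, h => by
    classical
    refine List.perm_iff_count.2 fun i => ?_
    have := (blocks_perm (Nat.succ_inj.1 h)).count_eq i
    simp only [blocks, labels, List.flatMap_cons, List.flatten_cons, List.count_append,
      List.count_cons, List.count_nil] at this ⊢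
    lia

theorem canonList_perm {L : List (List ℕ)} {k : ℕ} (hk : L.length = k + 1) (g : ℕ)
    (e : ℕ → ℕ) : (canonList L g e).Perm (L.flatten ++ (List.range' 1 (2 * k + 4 * g)).map e) := by
  rw [canonList_eq_surfaceWord hk]
  obtain ⟨C, Cs, rfl⟩ := List.exists_cons_of_length_eq_add_one hk
  have hblocks := blocks_perm (ps := pairList e k) (Cs := Cs)
    (by simpa [pairList] using (Nat.succ_inj.1 hk).symm)
  rw [surfaceWord, List.flatten_cons, ← List.range'_append_1, List.map_append, ← labels_pairList,
    add_comm 1, List.append_assoc]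
  simpa using (hblocks.append_right _).append_left C

theorem QOEquiv.length_eq {L L' : List (List ℕ)} (h : QOEquiv L L') : L.length = L'.length :=
  let ⟨_, hperm, hrot⟩ := h
  hperm.length_eq.trans hrot.length_eq

theorem QOEquiv.flatten_perm {L L' : List (List ℕ)} (h : QOEquiv L L') :
    L.flatten.Perm L'.flatten :=
  let ⟨_, hperm, hrot⟩ := h
  hperm.flatten.trans (List.Perm.flatten_congr (hrot.imp fun _ _ => List.IsRotated.perm))

theorem canonList_gluingEquiv {L L' : List (List ℕ)} (h : QOEquiv L L') {k : ℕ}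
    (hk : L.length = k + 1) (g : ℕ) (e : ℕ → ℕ) :
    GluingEquiv {p | p ∈ canonPairs (k + 1) g e} (canonList L g e) (canonList L' g e) := by
  rw [canonList_eq_surfaceWord hk, canonList_eq_surfaceWord (h.length_eq ▸ hk), canonPairs_succ]
  have hps : ∀ p ∈ pairList e k, p ∈ pairList e k ++ handlePairs e (2 * k + 1) g :=
    fun _ => List.mem_append_left _
  have hM : IsCentral {p | p ∈ pairList e k ++ handlePairs e (2 * k + 1) g}
      ((List.range' (2 * k + 1) (4 * g)).map e) :=
    isCentral_map_range' fun _ => List.mem_append_right _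
  obtain ⟨L'', hperm, hrot⟩ := h
  exact (surfaceWord_gluingEquiv_of_perm hperm (by simpa [pairList] using hk) hps hM).trans
    (surfaceWord_gluingEquiv_of_forall₂_isRotated hrot hps hM)

theorem mem_range'_one {i n : ℕ} : i ∈ List.range' 1 n ↔ i ∈ Set.Icc 1 n := by
  rw [List.mem_range'_1, Set.mem_Icc, Nat.lt_one_add_iff]

theorem mem_map_range'_one {e : ℕ → ℕ} {i n : ℕ} :
    i ∈ (List.range' 1 n).map e ↔ i ∈ e '' Set.Icc 1 n := by
  simp only [List.mem_map, mem_range'_one, Set.mem_image]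

theorem FreshLabels.nodup_append {e : ℕ → ℕ} {n : ℕ} {l : List ℕ}
    (h : FreshLabels e n l.toFinset) (hl : l.Nodup) : (l ++ (List.range' 1 n).map e).Nodup := by
  refine hl.append (List.Nodup.map_on ?_ List.nodup_range') fun i hil hi => ?_
  · exact fun i hi j hj => h.1 (mem_range'_one.1 hi) (mem_range'_one.1 hj)
  · obtain ⟨j, hj, rfl⟩ := mem_map_range'_one.1 hi
    exact h.2 j hj (List.mem_toFinset.2 hil)

theorem gluable_canon {L : List (List ℕ)} (hL : QOValid L) {k : ℕ} (hk : L.length = k + 1)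
    {g : ℕ} {e : ℕ → ℕ} (he : FreshLabels e (2 * k + 4 * g) L.flatten.toFinset) :
    Gluable (canonPairs (k + 1) g e) (canonList L g e) := by
  obtain ⟨hne, hnodup, hblocks⟩ := hL
  have hperm := canonList_perm hk g e
  have hlabels := labels_canonPairs_perm k g e
  have hword := he.nodup_append hnodup
  refine ⟨fun h => ?_, hperm.nodup_iff.2 hword, hlabels.nodup_iff.2 hword.of_append_right,
    fun i hi => ?_⟩
  · obtain ⟨C, hC⟩ := List.exists_mem_of_ne_nil L hne
    have hflatten : L.flatten = [] := (List.append_eq_nil_iff.1 (h ▸ hperm).nil_eq.symm).1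
    exact hblocks C hC (List.flatten_eq_nil_iff.1 hflatten C hC)
  · rw [List.mem_toFinset, hperm.mem_iff]
    exact List.mem_append_right _ (hlabels.mem_iff.1 hi)

theorem FreshLabels.exists_relabeling {e e' : ℕ → ℕ} {n : ℕ} {s : Finset ℕ}
    (he : FreshLabels e n s) (he' : FreshLabels e' n s) :
    ∃ ρ : ℕ → ℕ, (∀ i ∈ s, ρ i = i) ∧ (∀ i ∈ Set.Icc 1 n, ρ (e i) = e' i) ∧
      Set.InjOn ρ (s ∪ e '' Set.Icc 1 n) := by
  let ρ i := if i ∈ s then i else e' (Function.invFunOn e (Set.Icc 1 n) i)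
  have hs : ∀ i ∈ s, ρ i = i := fun i hi => if_pos hi
  have he_map : ∀ i ∈ Set.Icc 1 n, ρ (e i) = e' i := fun i hi => by
    simp only [ρ, if_neg (he.2 i hi), he.1.leftInvOn_invFunOn hi]
  refine ⟨ρ, hs, he_map, ?_⟩
  rintro x (hx | ⟨i, hi, rfl⟩) y (hy | ⟨j, hj, rfl⟩) hxy
  · rwa [hs x hx, hs y hy] at hxy
  · rw [hs x hx, he_map j hj] at hxy
    exact absurd (hxy ▸ hx) (he'.2 j hj)
  · rw [he_map i hi, hs y hy] at hxy
    exact absurd (hxy ▸ hy) (he'.2 i hi)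
  · rw [he_map i hi, he_map j hj] at hxy
    rw [he'.1 hi hj hxy]

theorem map_blocks {α β : Type*} (ρ : α → β) : ∀ (ps : List (α × α)) (Cs : List (List α)),
    (blocks ps Cs).map ρ = blocks (ps.map (Prod.map ρ ρ)) (Cs.map (List.map ρ))
  | [], _ => rfl
  | _ :: _, [] => rfl
  | p :: ps, C :: Cs => by simp [blocks, map_blocks ρ ps Cs]

theorem map_surfaceWord {α β : Type*} (ρ : α → β) (ps : List (α × α)) (M : List α) :
    ∀ L : List (List α), (surfaceWord ps M L).map ρ =
      surfaceWord (ps.map (Prod.map ρ ρ)) (M.map ρ) (L.map (List.map ρ))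
  | [] => rfl
  | C :: Cs => by simp [surfaceWord, map_blocks]

theorem map_pairList {e e' ρ : ℕ → ℕ} {k : ℕ} (he : ∀ i ∈ Set.Icc 1 (2 * k), ρ (e i) = e' i) :
    (pairList e k).map (Prod.map ρ ρ) = pairList e' k := by
  rw [pairList, List.map_map]
  refine List.map_congr_left fun i hi => ?_
  rw [List.mem_range] at hi
  exact Prod.ext (he _ ⟨by lia, by lia⟩) (he _ ⟨by lia, by lia⟩)

theorem map_canonPairs {e e' ρ : ℕ → ℕ} {k g : ℕ}
    (he : ∀ i ∈ Set.Icc 1 (2 * k + 4 * g), ρ (e i) = e' i) :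
    (canonPairs (k + 1) g e).map (Prod.map ρ ρ) = canonPairs (k + 1) g e' := by
  rw [canonPairs_succ, canonPairs_succ, List.map_append,
    map_pairList fun i hi => he i ⟨hi.1, hi.2.trans (Nat.le_add_right _ _)⟩, handlePairs,
    List.map_flatMap]
  refine congrArg _ (List.flatMap_congr fun j hj => ?_)
  rw [List.mem_range] at hj
  simp only [List.map_cons, List.map_nil, Prod.map]
  rw [he _ ⟨by lia, by lia⟩, he _ ⟨by lia, by lia⟩, he _ ⟨by lia, by lia⟩,
    he _ ⟨by lia, by lia⟩]

theorem map_canonList {e e' ρ : ℕ → ℕ} {L : List (List ℕ)} {k g : ℕ} (hk : L.length = k + 1)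
    (hfix : ∀ i ∈ L.flatten, ρ i = i) (he : ∀ i ∈ Set.Icc 1 (2 * k + 4 * g), ρ (e i) = e' i) :
    (canonList L g e).map ρ = canonList L g e' := by
  have hL : L.map (List.map ρ) = L := by
    refine (List.map_congr_left fun C hC => ?_).trans L.map_id
    exact (List.map_congr_left fun i hi => hfix i (List.mem_flatten_of_mem hC hi)).trans C.map_id
  have hM : ((List.range' (2 * k + 1) (4 * g)).map e).map ρ =
      (List.range' (2 * k + 1) (4 * g)).map e' := by
    rw [List.map_map]
    refine List.map_congr_left fun i hi => ?_
    rw [List.mem_range'_1] at hi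
    exact he i ⟨by lia, by lia⟩
  rw [canonList_eq_surfaceWord hk, canonList_eq_surfaceWord hk, map_surfaceWord, hL, hM,
    map_pairList fun i hi => he i ⟨hi.1, hi.2.trans (Nat.le_add_right _ _)⟩]

theorem xiChain_canon_eq_of_freshLabels {P : ModularOperad} (f : AssMorphism P)
    {L : List (List ℕ)} (hL : QOValid L) {k : ℕ} (hk : L.length = k + 1) {g : ℕ} {e e' : ℕ → ℕ}
    (he : FreshLabels e (2 * k + 4 * g) L.flatten.toFinset)
    (he' : FreshLabels e' (2 * k + 4 * g) L.flatten.toFinset) :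
    xiChain P (canonPairs (k + 1) g e) (f.f (canonList L g e)) =
      xiChain P (canonPairs (k + 1) g e') (f.f (canonList L g e')) := by
  obtain ⟨ρ, hfix, hρ, hinj⟩ := he.exists_relabeling he'
  have hmem {i : ℕ} (hi : i ∈ canonList L g e) :
      i ∈ L.flatten ∨ i ∈ (List.range' 1 (2 * k + 4 * g)).map e :=
    List.mem_append.1 ((canonList_perm hk g e).mem_iff.1 hi)
  rw [← map_canonPairs hρ, ← map_canonList hk (fun i hi => hfix i (List.mem_toFinset.2 hi)) hρ]
  refine (xiChain_map f (gluable_canon hL hk he) (hinj.mono fun i hi => ?_) fun i hi hi' => ?_).symm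
  · exact (hmem (List.mem_toFinset.1 hi)).imp List.mem_toFinset.2 mem_map_range'_one.1
  · refine hfix i (List.mem_toFinset.2 ((hmem hi).resolve_right fun hi_e => hi' ?_))
    exact (labels_canonPairs_perm k g e).mem_iff.2 hi_e

end CanonicalExpressions

/-- (Lemma 8, well-definedness of `f̃`.)  The value
`ξ_{12}ξ_{34}⋯ξ_{2b+4g-4,2b+4g-2} f(a_q) ∈ P(C,G)` is the same for every
canonical expression of `q`: it does not depend on the choice of fresh labels,
of representing tuples of the cycles, nor of the order of the cycles.
Here `L` and `L'` present the same `q` (same blocks up to permutation and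
rotation) and `e`, `e'` are two systems of fresh labels. -/
theorem ftilde_well_defined (P : ModularOperad) (f : AssMorphism P)
    (L L' : List (List ℕ)) (g : ℕ)
    (hL : QOValid L) (hL' : QOValid L') (hLL' : QOEquiv L L')
    (e e' : ℕ → ℕ)
    (he : FreshLabels e (4 * g + 2 * L.length - 2) L.flatten.toFinset)
    (he' : FreshLabels e' (4 * g + 2 * L'.length - 2) L'.flatten.toFinset) :
    xiChain P (canonPairs L.length g e) (f.f (canonList L g e)) =
      xiChain P (canonPairs L'.length g e') (f.f (canonList L' g e')) := by
  obtain ⟨k, hk⟩ : ∃ k, L.length = k + 1 :=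
    Nat.exists_eq_add_one.2 (List.length_pos_iff.2 hL.1)
  have hk' : L'.length = k + 1 := hLL'.length_eq ▸ hk
  have hn : 4 * g + 2 * (k + 1) - 2 = 2 * k + 4 * g := by lia
  rw [hk, hn] at he
  rw [hk', hn] at he'
  rw [hk, hk']
  have he_L' : FreshLabels e (2 * k + 4 * g) L'.flatten.toFinset :=
    List.toFinset_eq_of_perm _ _ hLL'.flatten_perm ▸ he
  calc xiChain P (canonPairs (k + 1) g e) (f.f (canonList L g e))
      = xiChain P (canonPairs (k + 1) g e) (f.f (canonList L' g e)) :=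
        xiChain_eq_of_gluingEquiv f (canonList_gluingEquiv hLL' hk g e) (gluable_canon hL hk he)
    _ = xiChain P (canonPairs (k + 1) g e') (f.f (canonList L' g e')) :=
        xiChain_canon_eq_of_freshLabels f hL' hk' he_L' he'
end

section
/- Let P be a modular operad in sets and f: Ass → P a morphism of cyclic operads. Let a_q := ⟨C₁ e₁ C₂ e₂ e₃ C₃ e₄ ⋯ e_{2b−3} C_b e_{2b−2} e_{2b−1} ⋯ e_{4g+2b−2}⟩ with C₁ = (c¹₁,…,c¹ₖ), and let a'_q be obtained from a_q by replacing C₁ with its cyclic rotation C'₁ := (c¹₂,…,c¹ₖ,c¹₁), leaving everything else unchanged. Then ξ_{12}ξ_{34}⋯ξ_{2b+4g−4,2b+4g−2} f(a_q) = ξ_{12}ξ_{34}⋯ξ_{2b+4g−4,2b+4g−2} f(a'_q), where ξ_{ij} abbreviates ξ_{e_i e_j} and the string of contractions is the canonical one ξ_{12}⋯ξ_{2b−3,2b−2}ξ_{2b−1,2b+1}⋯ξ_{2b+4g−4,2b+4g−2}. -/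
/-!
Read `a_q` as a cyclic word on the boundary of a disc whose letters `e_i` are glued in pairs.

The operadic input is one identity: in `ξ_{pq} f⟨p X q Y⟩` the words `X` and `Y` matter only up to
cyclic rotation. To see it, cut the disc by a new chord `x, y` separating `p` from `q`; axiom 6
trades the contraction along `p, q` for the one along `x, y`, and gluing the two halves back along
`p, q` leaves the arcs `X` and `Y` rotated.

The rest is combinatorics of words. A word `T` closes off if, using these moves for the contracted
pairs, everything outside `T` may be rotated cyclically. The words `p D q` with `p, q` contracted
close off in one move, the handles `s t u v` with `s, u` and `t, v` contracted in four, and a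
concatenation of words that close off closes off. All of `a_q` apart from `C₁` is such a
concatenation.
-/

open List

namespace ModularOperad

theorem xi_act_eq_of_fixed (P : ModularOperad) {a b : ℕ} {x : P.El} {ρ : ℕ → ℕ}
    (ha : a ∈ P.legs x) (hb : b ∈ P.legs x) (hab : a ≠ b)
    (hρ : Set.InjOn ρ (P.legs x : Set ℕ))
    (hfix : ∀ c ∈ P.legs x, c ≠ a → c ≠ b → ρ c = c) :
    P.xi (ρ a) (ρ b) (P.act ρ x) = P.xi a b x := by
  rw [← P.act_xi ρ a b x ha hb hab hρ, P.act_congr ρ id, P.act_id]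
  intro c hc
  rw [P.legs_xi a b x ha hb hab, Finset.mem_erase, Finset.mem_erase] at hc
  exact hfix c hc.2.2 hc.2.1 hc.1

end ModularOperad

theorem exists_append_of_isRotated {α : Type*} {l l' : List α} (h : l ~r l') :
    ∃ X Y, l = X ++ Y ∧ l' = Y ++ X := by
  obtain ⟨n, hn, rfl⟩ := isRotated_iff_mod.1 h
  exact ⟨l.take n, l.drop n, (take_append_drop n l).symm, rotate_eq_drop_append_take hn⟩

namespace AssMorphism

variable {P : ModularOperad} (f : AssMorphism P)

theorem map_eq_of_isRotated {l l' : List ℕ} (hl : l.Nodup) (h : l ~r l') : f.f l = f.f l' := by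
  rcases eq_or_ne l [] with rfl | hne
  · rw [isRotated_nil_iff'.1 h]
  · exact f.f_rot l l' hne hl h

theorem comp_eq_of_isRotated {l l' X Y : List ℕ} {a b : ℕ} (hn : (X ++ a :: b :: Y).Nodup)
    (hne : X ++ Y ≠ []) (hl : l ~r X ++ [a]) (hl' : l' ~r b :: Y) :
    P.comp a b (f.f l) (f.f l') = f.f (X ++ Y) := by
  have hnX : (X ++ [a]).Nodup := hn.sublist (by simp)
  have hnY : (b :: Y).Nodup := hn.sublist (by simp)
  rw [f.map_eq_of_isRotated (hl.nodup_iff.2 hnX) hl,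
    f.map_eq_of_isRotated (hl'.nodup_iff.2 hnY) hl', f.f_comp X Y a b hn hne]

theorem mem_legs {l : List ℕ} (hl : l.Nodup) {a : ℕ} (ha : a ∈ l) : a ∈ P.legs (f.f l) := by
  rwa [f.legs_f l (ne_nil_of_mem ha) hl, mem_toFinset]

theorem xi_relabel {p q x y : ℕ} {X Y : List ℕ} (hp : (p :: (X ++ q :: Y)).Nodup)
    (hx : (x :: (X ++ y :: Y)).Nodup) :
    P.xi x y (f.f (x :: (X ++ y :: Y))) = P.xi p q (f.f (p :: (X ++ q :: Y))) := by
  let ρ : ℕ → ℕ := fun n => if n = x then p else if n = y then q else n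
  have hxy : x ≠ y := by grind
  have hρx : ρ x = p := if_pos rfl
  have hρy : ρ y = q := by simp [ρ, hxy.symm]
  have hρ_fixed : ∀ c, c ≠ x → c ≠ y → ρ c = c := fun c hcx hcy => by simp [ρ, hcx, hcy]
  have hρ_word : (x :: (X ++ y :: Y)).map ρ = p :: (X ++ q :: Y) := by
    have hρ_arc : ∀ Z : List ℕ, x ∉ Z → y ∉ Z → Z.map ρ = Z := fun Z hxZ hyZ =>
      (map_congr_left fun c hc => hρ_fixed c (ne_of_mem_of_not_mem hc hxZ)
        (ne_of_mem_of_not_mem hc hyZ)).trans (map_id Z)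
    simp only [map_cons, map_append, hρx, hρy, hρ_arc X (by grind) (by grind),
      hρ_arc Y (by grind) (by grind)]
  have hρ_inj : Set.InjOn ρ ((x :: (X ++ y :: Y)).toFinset : Set ℕ) := fun a ha b hb hab =>
    inj_on_of_nodup_map (hρ_word ▸ hp) (mem_toFinset.1 ha) (mem_toFinset.1 hb) hab
  rw [← hρ_word, f.f_act ρ _ (cons_ne_nil _ _) hx hρ_inj, ← hρx, ← hρy]
  refine (P.xi_act_eq_of_fixed (f.mem_legs hx (by simp)) (f.mem_legs hx (by simp)) hxy ?_
    fun c _ => hρ_fixed c).symm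
  rwa [f.legs_f _ (cons_ne_nil _ _) hx]

theorem xi_cut {p q x y : ℕ} {A B C D : List ℕ}
    (h : (D ++ p :: A ++ x :: y :: (B ++ q :: C)).Nodup) :
    P.xi p q (f.f (p :: (A ++ B ++ q :: (C ++ D)))) =
      P.xi x y (f.f (x :: (D ++ C ++ y :: (B ++ A)))) := by
  have hsplit : ((D ++ p :: A ++ [x]) ++ (y :: (B ++ q :: C))).Nodup := by
    simpa only [append_assoc, cons_append, nil_append] using h
  have hleft : (D ++ p :: A ++ [x]).Nodup := hsplit.of_append_left
  have hright : (y :: (B ++ q :: C)).Nodup := hsplit.of_append_right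
  have hdisj :
      Disjoint (P.legs (f.f (D ++ p :: A ++ [x]))) (P.legs (f.f (y :: (B ++ q :: C)))) := by
    rw [f.legs_f _ (by simp) hleft, f.legs_f _ (by simp) hright, disjoint_toFinset_iff_disjoint]
    exact disjoint_of_nodup_append hsplit
  have hglued : (A ++ x :: D ++ p :: q :: (C ++ y :: B)).Nodup := by
    refine (perm_iff_count.2 fun a => ?_).nodup h
    simp only [count_append, count_cons]
    omega
  have hx_ne_p : p ≠ x := by rintro rfl; simp [nodup_append] at hleft
  have hy_ne_q : q ≠ y := by rintro rfl; simp at hright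
  calc P.xi p q (f.f (p :: (A ++ B ++ q :: (C ++ D))))
      = P.xi p q (P.comp x y (f.f (D ++ p :: A ++ [x])) (f.f (y :: (B ++ q :: C)))) := by
        rw [f.f_comp _ _ x y h (by simp)]
        refine congrArg _ (f.map_eq_of_isRotated (h.sublist (by simp)) ?_).symm
        simpa using isRotated_append (l := D) (l' := p :: (A ++ B ++ q :: C))
    _ = P.xi x y (P.comp p q (f.f (D ++ p :: A ++ [x])) (f.f (y :: (B ++ q :: C)))) :=
        P.xi_comp_exchange p q x y _ _ (f.mem_legs hleft (by simp)) (f.mem_legs hleft (by simp))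
          (f.mem_legs hright (by simp)) (f.mem_legs hright (by simp)) hx_ne_p hy_ne_q hdisj
    _ = P.xi x y (f.f ((A ++ x :: D) ++ (C ++ y :: B))) := by
        rw [f.comp_eq_of_isRotated hglued (by simp)]
        · simpa using isRotated_append (l := D ++ [p]) (l' := A ++ [x])
        · exact isRotated_append (l := y :: B) (l' := q :: C)
    _ = P.xi x y (f.f (x :: (D ++ C ++ y :: (B ++ A)))) := by
        refine congrArg _ (f.map_eq_of_isRotated (hglued.sublist (by simp)) ?_)
        simpa using isRotated_append (l := A) (l' := x :: (D ++ C ++ y :: B))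

theorem xi_eq_of_isRotated_arcs {p q : ℕ} {X X' Y Y' : List ℕ} (h : (p :: (X ++ q :: Y)).Nodup)
    (hX : X ~r X') (hY : Y ~r Y') :
    P.xi p q (f.f (p :: (X ++ q :: Y))) = P.xi p q (f.f (p :: (X' ++ q :: Y'))) := by
  obtain ⟨A, B, rfl, rfl⟩ := exists_append_of_isRotated hX
  obtain ⟨C, D, rfl, rfl⟩ := exists_append_of_isRotated hY
  obtain ⟨x, hx⟩ := Infinite.exists_notMem_finset (p :: (A ++ B ++ q :: (C ++ D))).toFinset
  obtain ⟨y, hy⟩ := Infinite.exists_notMem_finset (x :: p :: (A ++ B ++ q :: (C ++ D))).toFinset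
  rw [mem_toFinset] at hx hy
  have hcut : (D ++ p :: A ++ x :: y :: (B ++ q :: C)).Nodup := by
    refine (perm_iff_count.2 fun a => ?_).nodup (nodup_cons.2 ⟨hy, nodup_cons.2 ⟨hx, h⟩⟩)
    simp only [count_append, count_cons]
    omega
  have hcut' : (x :: (D ++ C ++ y :: (B ++ A))).Nodup := by
    have hsub : (D ++ A ++ x :: y :: (B ++ C)).Nodup := hcut.sublist (by simp)
    refine (perm_iff_count.2 fun a => ?_).nodup hsub
    simp only [count_append, count_cons]
    omega
  have hrot : q :: (D ++ C ++ p :: (B ++ A)) ~r p :: (B ++ A ++ q :: (D ++ C)) :=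
    isRotated_append (l := q :: (D ++ C)) (l' := p :: (B ++ A))
  have hrot_nodup : (q :: (D ++ C ++ p :: (B ++ A))).Nodup := by
    refine (perm_iff_count.2 fun a => ?_).nodup h
    simp only [count_append, count_cons]
    omega
  calc P.xi p q (f.f (p :: (A ++ B ++ q :: (C ++ D))))
      = P.xi x y (f.f (x :: (D ++ C ++ y :: (B ++ A)))) := f.xi_cut hcut
    _ = P.xi q p (f.f (q :: (D ++ C ++ p :: (B ++ A)))) := f.xi_relabel hrot_nodup hcut'
    _ = P.xi p q (f.f (p :: (B ++ A ++ q :: (D ++ C)))) := by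
        rw [P.xi_symm, f.map_eq_of_isRotated hrot_nodup hrot]

end AssMorphism

/-- The letters of the pairs `prs`, in order: the labels that `xiChain P prs` contracts. -/
def pairLabels {α : Type*} (prs : List (α × α)) : List α :=
  prs.flatMap fun p => [p.1, p.2]

section PairLabels

variable {α : Type*}

@[simp]
theorem pairLabels_cons (p : α × α) (prs : List (α × α)) :
    pairLabels (p :: prs) = p.1 :: p.2 :: pairLabels prs :=
  rfl

theorem pairLabels_append (s t : List (α × α)) :
    pairLabels (s ++ t) = pairLabels s ++ pairLabels t :=
  flatMap_append

theorem pairLabels_perm {s t : List (α × α)} (h : s ~ t) : pairLabels s ~ pairLabels t :=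
  h.flatMap_right _

end PairLabels

section XiChain

variable (P : ModularOperad)

theorem legs_xiChain_s11 {prs : List (ℕ × ℕ)} {x : P.El} (hn : (pairLabels prs).Nodup)
    (hx : (pairLabels prs).toFinset ⊆ P.legs x) :
    P.legs (xiChain P prs x) = P.legs x \ (pairLabels prs).toFinset := by
  induction prs with
  | nil => simp [xiChain, pairLabels]
  | cons p prs ih =>
    simp only [pairLabels_cons, nodup_cons, mem_cons, not_or, toFinset_cons,
      Finset.insert_subset_iff] at hn hx
    obtain ⟨⟨hne, hp₁⟩, hp₂, hn⟩ := hn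
    obtain ⟨hx₁, hx₂, hx⟩ := hx
    have ih := ih hn hx
    change P.legs (P.xi p.1 p.2 (xiChain P prs x)) = _
    rw [P.legs_xi p.1 p.2 _ (by simp [ih, hx₁, hp₁]) (by simp [ih, hx₂, hp₂]) hne, ih]
    ext a
    simp only [Finset.mem_erase, Finset.mem_sdiff, pairLabels_cons, mem_toFinset, mem_cons]
    tauto

theorem xiChain_perm {s t : List (ℕ × ℕ)} (h : s ~ t) {x : P.El} (hn : (pairLabels s).Nodup)
    (hx : (pairLabels s).toFinset ⊆ P.legs x) : xiChain P s x = xiChain P t x := by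
  induction h with
  | nil => rfl
  | cons p _ ih =>
    simp only [pairLabels_cons, nodup_cons, toFinset_cons, Finset.insert_subset_iff] at hn hx
    exact congrArg (P.xi p.1 p.2) (ih hn.2.2 hx.2.2)
  | swap p q l =>
    simp only [pairLabels_cons, nodup_cons, mem_cons, not_or, toFinset_cons,
      Finset.insert_subset_iff] at hn hx
    obtain ⟨⟨hq, hqp₁, hqp₂, hq₁⟩, ⟨hqp₁', hqp₂', hq₂⟩, ⟨hp, hp₁⟩, hp₂, hn⟩ := hn
    obtain ⟨hxq₁, hxq₂, hxp₁, hxp₂, hx⟩ := hx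
    have hlegs : ∀ a ∈ P.legs x, a ∉ pairLabels l → a ∈ P.legs (xiChain P l x) := fun a ha hal => by
      simp [legs_xiChain_s11 P hn hx, ha, hal]
    exact P.xi_xi q.1 q.2 p.1 p.2 _ (hlegs _ hxq₁ hq₁) (hlegs _ hxq₂ hq₂) (hlegs _ hxp₁ hp₁)
      (hlegs _ hxp₂ hp₂) hq hp hqp₁ hqp₂ hqp₁' hqp₂'
  | trans h₁ _ ih₁ ih₂ =>
    have hlabels := pairLabels_perm h₁
    exact (ih₁ hn hx).trans (ih₂ (hlabels.nodup_iff.1 hn) (toFinset_eq_of_perm _ _ hlabels ▸ hx))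

theorem xiChain_congr_of_mem {prs : List (ℕ × ℕ)} {p q : ℕ} {x y : P.El} (hpq : (p, q) ∈ prs)
    (hn : (pairLabels prs).Nodup) (hx : (pairLabels prs).toFinset ⊆ P.legs x)
    (hy : (pairLabels prs).toFinset ⊆ P.legs y) (hxy : P.xi p q x = P.xi p q y) :
    xiChain P prs x = xiChain P prs y := by
  have hperm : prs ~ prs.erase (p, q) ++ [(p, q)] :=
    (perm_cons_erase hpq).trans (perm_append_singleton _ _).symm
  rw [xiChain_perm P hperm hn hx, xiChain_perm P hperm hn hy]
  simp only [xiChain, foldr_append, foldr_cons, foldr_nil, hxy]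

end XiChain

/-- `l` is a word without repetitions containing the letters of `prs`, which are themselves
distinct: these are the words for which `xiChain P prs (f.f l)` is a genuine contraction. -/
def Contractible {α : Type*} (prs : List (α × α)) (l : List α) : Prop :=
  pairLabels prs <+~ l ∧ l.Nodup

namespace Contractible

theorem perm {α : Type*} {prs : List (α × α)} {l l' : List α} (h : Contractible prs l)
    (hl : l ~ l') : Contractible prs l' :=
  ⟨hl.subperm_left.1 h.1, hl.nodup_iff.1 h.2⟩

theorem pairLabels_nodup {α : Type*} {prs : List (α × α)} {l : List α} (h : Contractible prs l) :
    (pairLabels prs).Nodup :=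
  let ⟨_, hperm, hsub⟩ := h.1
  hperm.nodup_iff.1 (h.2.sublist hsub)

theorem pairLabels_subset_legs {P : ModularOperad} (f : AssMorphism P) {prs : List (ℕ × ℕ)}
    {l : List ℕ} (h : Contractible prs l) : (pairLabels prs).toFinset ⊆ P.legs (f.f l) :=
  fun _ ha => f.mem_legs h.2 (h.1.subset (mem_toFinset.1 ha))

end Contractible

/-- `Slides prs l l'`: the word `l` can be turned into `l'` by cyclic rotations and by rotating
the two arcs into which a pair of `prs` cuts a cyclic word. -/
inductive Slides {α : Type*} (prs : List (α × α)) : List α → List α → Prop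
  | rotate {l l' : List α} : l ~r l' → Slides prs l l'
  | arcs {p q : α} {X X' Y Y' : List α} : (p, q) ∈ prs → X ~r X' → Y ~r Y' →
      Slides prs (p :: (X ++ q :: Y)) (p :: (X' ++ q :: Y'))
  | trans {l l' l'' : List α} : Slides prs l l' → Slides prs l' l'' → Slides prs l l''

namespace Slides

variable {α : Type*} {prs : List (α × α)}

instance : Trans (Slides prs) (Slides prs) (Slides prs) := ⟨trans⟩

theorem perm {l l' : List α} (h : Slides prs l l') : l ~ l' := by
  induction h with
  | rotate h => exact h.perm
  | arcs _ hX hY => exact (hX.perm.append (hY.perm.cons _)).cons _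
  | trans _ _ h₁ h₂ => exact h₁.trans h₂

theorem xiChain_eq {P : ModularOperad} (f : AssMorphism P) {prs : List (ℕ × ℕ)} {l l' : List ℕ}
    (h : Slides prs l l') (hl : Contractible prs l) :
    xiChain P prs (f.f l) = xiChain P prs (f.f l') := by
  induction h with
  | rotate h => rw [f.map_eq_of_isRotated hl.2 h]
  | arcs hpq hX hY =>
    have hl' := hl.perm (Slides.arcs hpq hX hY).perm
    exact xiChain_congr_of_mem P hpq hl.pairLabels_nodup (hl.pairLabels_subset_legs f)
      (hl'.pairLabels_subset_legs f) (f.xi_eq_of_isRotated_arcs hl.2 hX hY)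
  | trans h₁ _ ih₁ ih₂ => exact (ih₁ hl).trans (ih₂ (hl.perm h₁.perm))

end Slides

/-- The letters outside the word `T` may be rotated cyclically by slides. Topologically, gluing
the pairs of `prs` inside `T` leaves the rest of the word on a boundary circle of its own. -/
def ClosesOff {α : Type*} (prs : List (α × α)) (T : List α) : Prop :=
  ∀ ⦃X X' : List α⦄, X ~r X' → Slides prs (T ++ X) (T ++ X')

namespace ClosesOff

variable {α : Type*} {prs : List (α × α)}

theorem slides_append {T X X' : List α} (hT : ClosesOff prs T) (h : X ~r X') :
    Slides prs (X ++ T) (X' ++ T) :=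
  calc Slides prs (X ++ T) (T ++ X) := .rotate isRotated_append
    Slides prs _ (T ++ X') := hT h
    Slides prs _ (X' ++ T) := .rotate isRotated_append

theorem append {S T : List α} (hS : ClosesOff prs S) (hT : ClosesOff prs T) :
    ClosesOff prs (S ++ T) := by
  intro Z Z' hZ
  obtain ⟨X, Y, rfl, rfl⟩ := exists_append_of_isRotated hZ
  calc Slides prs (S ++ T ++ (X ++ Y)) (T ++ (X ++ Y ++ S)) :=
        .rotate (by simpa using isRotated_append (l := S) (l' := T ++ (X ++ Y)))
    Slides prs _ (T ++ (Y ++ S ++ X)) :=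
        hT (by simpa using isRotated_append (l := X) (l' := Y ++ S))
    Slides prs _ (S ++ (X ++ T ++ Y)) :=
        .rotate (by simpa using isRotated_append (l := T ++ Y) (l' := S ++ X))
    Slides prs _ (S ++ (T ++ Y ++ X)) :=
        hS (by simpa using isRotated_append (l := X) (l' := T ++ Y))
    _ = S ++ T ++ (Y ++ X) := by simp

theorem flatten {L : List (List α)} (h : ∀ T ∈ L, ClosesOff prs T) : ClosesOff prs L.flatten := by
  induction L with
  | nil => exact fun _ _ => .rotate
  | cons T L ih =>
    rw [forall_mem_cons] at h
    exact h.1.append (ih h.2)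

theorem chord {p q : α} (hpq : (p, q) ∈ prs) (D : List α) :
    ClosesOff prs (p :: (D ++ [q])) := by
  intro X X' hX
  simpa using Slides.arcs hpq (.refl D) hX

theorem handle {s t u v : α} (hsu : (s, u) ∈ prs) (htv : (t, v) ∈ prs) :
    ClosesOff prs [s, t, u, v] := by
  intro Z Z' hZ
  obtain ⟨X, Y, rfl, rfl⟩ := exists_append_of_isRotated hZ
  have rotate_first (a : α) (l : List α) : Slides prs (a :: l) (l ++ [a]) :=
    .rotate (isRotated_concat a l).symm
  calc Slides prs (s :: ([t] ++ u :: (v :: X ++ Y))) (s :: ([t] ++ u :: (Y ++ v :: X))) :=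
        .arcs hsu (.refl _) isRotated_append
    Slides prs _ (t :: ([u] ++ Y ++ v :: (X ++ [s]))) := by
        simpa using rotate_first s ([t, u] ++ Y ++ v :: X)
    Slides prs _ (t :: (Y ++ [u] ++ v :: (X ++ [s]))) :=
        .arcs htv isRotated_append (.refl _)
    Slides prs _ (s :: ([t] ++ Y ++ u :: (v :: X))) :=
        .rotate (by simpa using isRotated_append (l := t :: Y ++ u :: v :: X) (l' := [s]))
    Slides prs _ (s :: (Y ++ [t] ++ u :: (v :: X))) :=
        .arcs hsu isRotated_append (.refl _)
    Slides prs _ (t :: ([u] ++ v :: (X ++ s :: Y))) :=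
        .rotate (by simpa using isRotated_append (l := s :: Y) (l' := t :: u :: v :: X))
    Slides prs _ (t :: ([u] ++ v :: (Y ++ X ++ [s]))) :=
        .arcs htv (.refl _) (by simpa using isRotated_append (l := X ++ [s]) (l' := Y))
    Slides prs _ (s :: t :: u :: v :: (Y ++ X)) :=
        .rotate (by simpa using isRotated_append (l := t :: u :: v :: (Y ++ X)) (l' := [s]))

end ClosesOff

theorem map_range_mul {α : Type*} (h : ℕ → α) (k n : ℕ) :
    (range (k * n)).map h = (range n).flatMap fun i => (range k).map fun j => h (k * i + j) := by
  induction n with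
  | zero => simp
  | succ n ih =>
    simp [Nat.mul_succ, range_add, range_succ, flatMap_append, ih, Function.comp_def]

section Canonical

variable (g : ℕ) (e : ℕ → ℕ)

theorem canonPairs_succ_s11 (n : ℕ) :
    canonPairs (n + 1) g e = ((range n).map fun i => (e (2 * i + 1), e (2 * i + 2))) ++
      (range g).flatMap fun j => [(e (2 * n + 4 * j + 1), e (2 * n + 4 * j + 3)),
        (e (2 * n + 4 * j + 2), e (2 * n + 4 * j + 4))] := by
  have hindex (j : ℕ) : 2 * (n + 1) - 1 + 4 * j = 2 * n + 4 * j + 1 ∧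
      2 * (n + 1) + 1 + 4 * j = 2 * n + 4 * j + 3 ∧ 2 * (n + 1) + 4 * j = 2 * n + 4 * j + 2 ∧
        2 * (n + 1) + 2 + 4 * j = 2 * n + 4 * j + 4 := by omega
  simp only [canonPairs, Nat.add_sub_cancel, hindex, flatMap_def]

theorem canonList_cons (C₁ : List ℕ) (R : List (List ℕ)) :
    canonList (C₁ :: R) g e = C₁ ++
      ((R.zipIdx.flatMap fun p => e (2 * p.2 + 1) :: (p.1 ++ [e (2 * p.2 + 2)])) ++
        (range g).flatMap fun j => [e (2 * R.length + 4 * j + 1), e (2 * R.length + 4 * j + 2),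
          e (2 * R.length + 4 * j + 3), e (2 * R.length + 4 * j + 4)]) := by
  have hindex (i j : ℕ) : 2 * R.length + 1 + (4 * j + i) = 2 * R.length + 4 * j + (i + 1) := by
    omega
  simp only [canonList, append_assoc, map_range_mul, hindex, flatMap_def]
  rfl

theorem canonList_perm_s11 (C₁ : List ℕ) (R : List (List ℕ)) :
    canonList (C₁ :: R) g e ~
      (C₁ :: R).flatten ++ pairLabels (canonPairs (R.length + 1) g e) := by
  have hblocks : (R.zipIdx.flatMap fun p => e (2 * p.2 + 1) :: (p.1 ++ [e (2 * p.2 + 2)])) ~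
      R.flatten ++ (range R.length).flatMap fun i => [e (2 * i + 1), e (2 * i + 2)] :=
    calc
      _ ~ R.zipIdx.flatMap fun p => p.1 ++ [e (2 * p.2 + 1), e (2 * p.2 + 2)] :=
        .flatMap_left _ fun _ _ => perm_middle.symm
      _ ~ R.zipIdx.flatMap Prod.fst ++
          R.zipIdx.flatMap fun p => [e (2 * p.2 + 1), e (2 * p.2 + 2)] :=
        (flatMap_append_perm _ _ _).symm
      _ = _ := by
        rw [flatMap_def, zipIdx_map_fst, range_eq_range' (n := R.length), ← zipIdx_map_snd 0 R,
          flatMap_map]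
  rw [canonList_cons, canonPairs_succ_s11, flatten_cons, pairLabels_append, append_assoc,
    ← append_assoc R.flatten]
  refine .append_left _ (.append ?_ ?_)
  · simpa [pairLabels, flatMap_map] using hblocks
  · rw [pairLabels, flatMap_assoc]
    exact .flatMap_left _ fun j _ => .cons _ (.swap _ _ _)

theorem pairLabels_canonPairs_perm (n : ℕ) :
    pairLabels (canonPairs (n + 1) g e) ~ (range (2 * n + 4 * g)).map fun i => e (i + 1) := by
  rw [canonPairs_succ_s11, pairLabels_append, range_add, map_append, map_map, map_range_mul,
    map_range_mul]
  refine .append ?_ ?_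
  · simp [pairLabels, flatMap_map, range_succ]
  · rw [pairLabels, flatMap_assoc]
    refine .flatMap_left _ fun j _ => ?_
    simp [range_succ, ← add_assoc, Perm.swap]

theorem slides_canonList {C₁ C₁' : List ℕ} (R : List (List ℕ)) (h : C₁ ~r C₁') :
    Slides (canonPairs (R.length + 1) g e) (canonList (C₁ :: R) g e)
      (canonList (C₁' :: R) g e) := by
  have hpairs := canonPairs_succ_s11 g e R.length
  rw [canonList_cons, canonList_cons]
  generalize canonPairs (R.length + 1) g e = prs at hpairs ⊢
  have hblocks : ClosesOff prs
      (R.zipIdx.flatMap fun p => e (2 * p.2 + 1) :: (p.1 ++ [e (2 * p.2 + 2)])) := by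
    rw [flatMap_def]
    refine .flatten (forall_mem_map.2 fun p hp => .chord ?_ _)
    rw [hpairs, mem_append, mem_map]
    exact .inl ⟨p.2, mem_range.2 (snd_lt_of_mem_zipIdx hp), rfl⟩
  have hhandles : ClosesOff prs
      ((range g).flatMap fun j => [e (2 * R.length + 4 * j + 1), e (2 * R.length + 4 * j + 2),
          e (2 * R.length + 4 * j + 3), e (2 * R.length + 4 * j + 4)]) := by
    rw [flatMap_def]
    refine .flatten (forall_mem_map.2 fun j hj => .handle ?_ ?_) <;>
      exact hpairs ▸ mem_append_right _ (mem_flatMap.2 ⟨j, hj, by simp⟩)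
  exact (hblocks.append hhandles).slides_append h

variable {g e}

theorem contractible_canonList {C₁ : List ℕ} {R : List (List ℕ)}
    (hL : (C₁ :: R).flatten.Nodup)
    (he : FreshLabels e (4 * g + 2 * (C₁ :: R).length - 2) (C₁ :: R).flatten.toFinset) :
    Contractible (canonPairs (R.length + 1) g e) (canonList (C₁ :: R) g e) := by
  have hperm := canonList_perm_s11 g e C₁ R
  have hlabels := pairLabels_canonPairs_perm g e R.length
  have hmem : ∀ i ∈ range (2 * R.length + 4 * g),
      i + 1 ∈ Set.Icc 1 (4 * g + 2 * (C₁ :: R).length - 2) := fun i hi => by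
    rw [mem_range] at hi
    rw [Set.mem_Icc, length_cons]
    omega
  refine ⟨(sublist_append_right _ _).subperm.trans hperm.symm.subperm, hperm.nodup_iff.2 ?_⟩
  refine ((hlabels.append_left _).nodup_iff).2 (nodup_append'.2 ⟨hL, ?_, ?_⟩)
  · refine nodup_range.map_on fun i hi j hj hij => ?_
    exact Nat.succ_injective (he.1 (hmem i hi) (hmem j hj) hij)
  · intro a ha ha'
    obtain ⟨i, hi, rfl⟩ := mem_map.1 ha'
    exact he.2 _ (hmem i hi) (mem_toFinset.2 ha)

end Canonical

/-- (Second half of the proof of Lemma 8.)  Replacing the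
representing tuple `C₁ = (c¹₁,…,c¹ₖ)` by its cyclic rotation
`C'₁ = (c¹₂,…,c¹ₖ,c¹₁)` in `a_q`, keeping everything else unchanged, does not
change the contracted element
`ξ_{12}ξ_{34}⋯ξ_{2b+4g-4,2b+4g-2} f(a_q)`. -/
theorem ftilde_rotate_block (P : ModularOperad) (f : AssMorphism P)
    (C₁ : List ℕ) (R : List (List ℕ)) (g : ℕ) (e : ℕ → ℕ)
    (hL : QOValid (C₁ :: R))
    (he : FreshLabels e (4 * g + 2 * (C₁ :: R).length - 2)
      (C₁ :: R).flatten.toFinset) :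
    xiChain P (canonPairs (C₁ :: R).length g e) (f.f (canonList (C₁ :: R) g e)) =
      xiChain P (canonPairs (C₁ :: R).length g e)
        (f.f (canonList (C₁.rotate 1 :: R) g e)) := by
  obtain ⟨-, hL, -⟩ := hL
  exact (slides_canonList g e R ⟨1, rfl⟩).xiChain_eq f (contractible_canonList hL he)
end
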